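/- arXiv:1701.06217 — 12 statements merged into one kernel-verified Lean document; each statement's English description precedes it below -/
import Mathlib

section
/- Let a and b be positive integers. If bn+1 divides the binomial coefficient C(an+bn, an) for all sufficiently large positive integers n, then every prime factor of a divides b. -/
/-!
Suppose `p` is a prime dividing `a` but not `b`, so that `p` is coprime to `a + b`. By Euler's
theorem `(a + b) * n + 1` is a nontrivial power `p ^ k` for arbitrarily large `n`. For such `n` the
prime `p` divides `b * n + 1 = p ^ k - a * n`, but no entry of row `p ^ k - 1` of Pascal's triangle.
-/

open Filter

theorem not_prime_dvd_choose_of_add_one_eq_pow {p k m j : ℕ} (hp : p.Prime) (hm : m + 1 = p ^ k)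
    (hj : j ≤ m) : ¬ p ∣ m.choose j := by
  induction j with
  | zero => simpa using hp.one_lt.ne'
  | succ j ih =>
    have dvd_sum : p ∣ m.choose j + m.choose (j + 1) := by
      rw [← Nat.choose_succ_succ, Nat.succ_eq_add_one, hm]
      exact hp.dvd_choose_pow j.succ_ne_zero (by omega)
    exact fun dvd_succ ↦ ih (by omega) ((Nat.dvd_add_left dvd_succ).mp dvd_sum)

theorem frequently_exists_mul_add_one_eq_pow {m q : ℕ} (hq : 1 < q) (hqm : q.Coprime m) :
    ∃ᶠ n in atTop, ∃ k ≠ 0, m * n + 1 = q ^ k := by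
  refine frequently_atTop.mpr fun N ↦ ?_
  have m_pos : 0 < m := Nat.pos_of_ne_zero fun hm ↦ hq.ne' (by simpa [hm] using hqm)
  have totient_pos : 0 < m.totient := Nat.totient_pos.mpr m_pos
  let k := m.totient * (m * N + 1)
  have pow_modEq_one : q ^ k ≡ 1 [MOD m] := by
    simpa only [k, pow_mul, one_pow] using (Nat.ModEq.pow_totient hqm).pow (m * N + 1)
  have one_le_pow : 1 ≤ q ^ k := Nat.one_le_pow _ _ (by omega)
  obtain ⟨n, hn⟩ := (Nat.modEq_iff_dvd' one_le_pow).mp pow_modEq_one.symm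
  have mul_le_mul : m * N ≤ m * n := by
    have le_k : m * N + 1 ≤ k := Nat.le_mul_of_pos_left _ totient_pos
    have k_lt_pow : k < q ^ k := Nat.lt_pow_self hq
    omega
  exact ⟨n, Nat.le_of_mul_le_mul_left mul_le_mul m_pos, k, by positivity, by omega⟩

theorem frequently_dvd_mul_add_one_and_not_dvd_choose {p a b : ℕ} (hp : p.Prime) (hpa : p ∣ a)
    (hpb : ¬ p ∣ b) :
    ∃ᶠ n in atTop, p ∣ b * n + 1 ∧ ¬ p ∣ (a * n + b * n).choose (a * n) := by
  have coprime_add : p.Coprime (a + b) :=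
    hp.coprime_iff_not_dvd.mpr fun h ↦ hpb ((Nat.dvd_add_right hpa).mp h)
  refine (frequently_exists_mul_add_one_eq_pow hp.one_lt coprime_add).mono ?_
  rintro n ⟨k, hk, hn⟩
  rw [add_mul] at hn
  have dvd_add : p ∣ a * n + (b * n + 1) := by
    rw [← add_assoc, hn]
    exact dvd_pow_self p hk
  exact ⟨(Nat.dvd_add_right (hpa.mul_right n)).mp dvd_add,
    not_prime_dvd_choose_of_add_one_eq_pow hp hn (Nat.le_add_right _ _)⟩

/-- Let `a` and `b` be positive integers. If `b*n + 1` divides `C(a*n + b*n, a*n)`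
for all sufficiently large positive integers `n`, then every prime factor of `a`
divides `b`. -/
theorem stmt_0 (a b : ℕ) (ha : 0 < a) (hb : 0 < b)
    (h : ∃ N : ℕ, ∀ n : ℕ, N ≤ n → (b * n + 1) ∣ Nat.choose (a * n + b * n) (a * n)) :
    ∀ p : ℕ, p.Prime → p ∣ a → p ∣ b := by
  intro p hp hpa
  by_contra hpb
  obtain ⟨N, hN⟩ := h
  obtain ⟨n, hn, dvd_linear, not_dvd_choose⟩ :=
    frequently_atTop.mp (frequently_dvd_mul_add_one_and_not_dvd_choose hp hpa hpb) N
  exact not_dvd_choose (dvd_linear.trans (hN n hn))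
end

section
/- For any odd prime p and any positive integers a > b with a not divisible by p, there exists a positive integer n such that pn−1 does not divide the binomial coefficient C(an, bn). Equivalently, there are no positive integers a > b with p ∤ a such that C(an, bn) ≡ 0 (mod pn−1) for all n ≥ 1. -/
/-!
A prime `q` not dividing `m` divides `m * n - 1` when `n` is the inverse of `m` modulo `q`, and then
`a * n`, `b * n` have the residues of the fractions `a / m`, `b / m` as their last digits in base
`q`. If `a < q`, both numbers have at most two digits, so by Lucas' theorem `q ∤ C(a n, b n)` as
soon as the residue of `b / m` is at most that of `a / m`. Such a `q` comes from Dirichlet's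
theorem: for `q ≡ -1 (mod m)` the residue of `x / m` grows with `x % m`, while for `q ≡ 1 (mod m)`
it falls as `x % m` grows through the nonzero values.
-/

lemma not_dvd_choose_of_mod_le {q n k : ℕ} (hq : q.Prime) (hn : n < q ^ 2) (hkn : k ≤ n)
    (hmod : k % q ≤ n % q) : ¬ q ∣ n.choose k := by
  have : Fact q.Prime := ⟨hq⟩
  have hdiv : n / q < q := Nat.div_lt_of_lt_mul (by rwa [← sq])
  rw [Choose.choose_modEq_choose_mod_mul_choose_div_nat.dvd_iff dvd_rfl,
    ← hq.coprime_iff_not_dvd]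
  exact (hq.coprime_choose_of_lt (Nat.mod_lt n hq.pos) hmod).mul_right
    (hq.coprime_choose_of_lt hdiv (Nat.div_le_div_right hkn))

/-- The residue in `{0, …, q - 1}` of the fraction `x / m` modulo `q`. It has this meaning for
`m` coprime to `q` and `q ≠ 0`, since the inverse in `ZMod q` is total. -/
def fracResidue (q m x : ℕ) : ℕ :=
  ((x : ZMod q) * (m : ZMod q)⁻¹).val

lemma natCast_fracResidue (q m x : ℕ) [NeZero q] :
    (fracResidue q m x : ZMod q) = x * (m : ZMod q)⁻¹ :=
  ZMod.natCast_zmod_val _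

lemma mul_fracResidue_one_mod (q m x : ℕ) [NeZero q] :
    x * fracResidue q m 1 % q = fracResidue q m x := by
  rw [← ZMod.val_natCast, Nat.cast_mul, natCast_fracResidue, Nat.cast_one, one_mul, fracResidue]

lemma mul_fracResidue_one_modEq {q m : ℕ} [NeZero q] (hmq : m.Coprime q) :
    m * fracResidue q m 1 ≡ 1 [MOD q] := by
  rw [← ZMod.natCast_eq_natCast_iff, Nat.cast_mul, natCast_fracResidue, Nat.cast_one, one_mul,
    ZMod.coe_mul_inv_eq_one m hmq]

lemma fracResidue_one_pos {q m : ℕ} (hq : 1 < q) (hmq : m.Coprime q) :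
    0 < fracResidue q m 1 := by
  have : NeZero q := ⟨by omega⟩
  refine Nat.pos_of_ne_zero fun h => hq.ne' (Nat.dvd_one.1 ?_)
  have hinv := mul_fracResidue_one_modEq hmq
  rw [h, mul_zero] at hinv
  exact Nat.modEq_zero_iff_dvd.1 hinv.symm

lemma fracResidue_eq_of_modEq {q m x y : ℕ} (hmq : m.Coprime q) (hy : y < q)
    (h : m * y ≡ x [MOD q]) : fracResidue q m x = y := by
  have hx : (x : ZMod q) = m * y := mod_cast ((ZMod.natCast_eq_natCast_iff _ _ _).2 h).symm
  rw [fracResidue, hx, mul_right_comm, ZMod.coe_mul_inv_eq_one m hmq, one_mul,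
    ZMod.val_cast_of_lt hy]

lemma coprime_of_add_one_eq_mul {q m k : ℕ} (hq : q + 1 = m * k) : m.Coprime q :=
  Nat.Coprime.of_dvd_left ⟨k, hq⟩ (Nat.coprime_self_add_left.2 (Nat.coprime_one_left q))

lemma coprime_of_eq_mul_add_one {q m k : ℕ} (hq : q = m * k + 1) : m.Coprime q := by
  simp [hq]

lemma fracResidue_of_add_one_eq_mul {q m k x : ℕ} (hq : q + 1 = m * k) (hx : x / m + 1 < k) :
    fracResidue q m x = x / m + x % m * k := by
  have hm : 0 < m := Nat.pos_of_mul_pos_right (b := k) (by omega)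
  refine fracResidue_eq_of_modEq (coprime_of_add_one_eq_mul hq) ?_ ?_
  · have : (x % m + 1) * k ≤ m * k := Nat.mul_le_mul_right k (Nat.mod_lt x hm)
    rw [add_mul, one_mul] at this
    omega
  · have : m * (x / m + x % m * k) = x + x % m * q := by
      linear_combination Nat.div_add_mod x m - x % m * hq
    simp [this, Nat.ModEq]

lemma fracResidue_of_eq_mul_add_one {q m k x : ℕ} (hm : 0 < m) (hq : q = m * k + 1)
    (hmx : ¬ m ∣ x) (hx : x / m < k) : fracResidue q m x = x / m + (m - x % m) * k + 1 := by
  obtain ⟨d, hd⟩ := Nat.exists_eq_add_of_le (Nat.mod_lt x hm).le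
  have hdm : d < m := by
    have : x % m ≠ 0 := fun h => hmx (Nat.dvd_of_mod_eq_zero h)
    omega
  rw [show m - x % m = d by omega]
  refine fracResidue_eq_of_modEq (coprime_of_eq_mul_add_one hq) ?_ ?_
  · have : (d + 1) * k ≤ m * k := Nat.mul_le_mul_right k hdm
    rw [add_mul, one_mul] at this
    omega
  · have : m * (x / m + d * k + 1) = x + d * q := by
      linear_combination Nat.div_add_mod x m - d * hq + hd
    simp [this, Nat.ModEq]

lemma exists_prime_add_one_eq_mul {m : ℕ} (hm : 0 < m) (N : ℕ) :
    ∃ q k, q.Prime ∧ N < k ∧ q + 1 = m * k := by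
  obtain ⟨q, hNq, hq, hmod⟩ := Nat.forall_exists_prime_gt_and_zmodEq (m * N) hm.ne'
    (isCoprime_one_left.neg_left : IsCoprime (-1 : ℤ) m)
  obtain ⟨k, hk⟩ : m ∣ q + 1 := by
    have := hmod.symm.dvd
    rw [sub_neg_eq_add] at this
    exact_mod_cast this
  exact ⟨q, k, hq, Nat.lt_of_mul_lt_mul_left (a := m) (by omega), hk⟩

lemma exists_prime_eq_mul_add_one {m : ℕ} (hm : 0 < m) (N : ℕ) :
    ∃ q k, q.Prime ∧ N < k ∧ q = m * k + 1 := by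
  obtain ⟨q, hq, hNq, hmod⟩ := Nat.exists_prime_gt_modEq_one (m * N + 1) hm.ne'
  obtain ⟨k, hk⟩ := hmod.symm.dvd'
  exact ⟨q, k, hq, Nat.lt_of_mul_lt_mul_left (a := m) (by omega), by have := hq.one_le; omega⟩

lemma exists_prime_fracResidue_le {m a b : ℕ} (hm : 0 < m) (hba : b ≤ a) (hmab : m ∣ a → m ∣ b) :
    ∃ q, q.Prime ∧ m.Coprime q ∧ a < q ∧ fracResidue q m b ≤ fracResidue q m a := by
  have hdiv : b / m ≤ a / m := Nat.div_le_div_right hba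
  have ha : a / m ≤ a := Nat.div_le_self a m
  rcases le_or_gt (b % m) (a % m) with hmod | hmod
  · obtain ⟨q, k, hq, hk, hqk⟩ := exists_prime_add_one_eq_mul hm (a + 1)
    have hkq : k ≤ q + 1 := hqk ▸ Nat.le_mul_of_pos_left k hm
    refine ⟨q, hq, coprime_of_add_one_eq_mul hqk, by omega, ?_⟩
    rw [fracResidue_of_add_one_eq_mul hqk (by omega),
      fracResidue_of_add_one_eq_mul hqk (by omega)]
    gcongr
  · have hmb : ¬ m ∣ b := fun h => by
      rw [Nat.mod_eq_zero_of_dvd h] at hmod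
      exact Nat.not_lt_zero _ hmod
    obtain ⟨q, k, hq, hk, hqk⟩ := exists_prime_eq_mul_add_one hm a
    have hkq : k ≤ m * k := Nat.le_mul_of_pos_left k hm
    refine ⟨q, hq, coprime_of_eq_mul_add_one hqk, by omega, ?_⟩
    rw [fracResidue_of_eq_mul_add_one hm hqk hmb (by omega),
      fracResidue_of_eq_mul_add_one hm hqk (mt hmab hmb) (by omega)]
    gcongr

lemma not_dvd_choose_mul_fracResidue_one {q m a b : ℕ} (hq : q.Prime) (haq : a < q) (hba : b ≤ a)
    (hle : fracResidue q m b ≤ fracResidue q m a) :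
    ¬ q ∣ (a * fracResidue q m 1).choose (b * fracResidue q m 1) := by
  have : NeZero q := ⟨hq.ne_zero⟩
  have hlt : fracResidue q m 1 < q := ZMod.val_lt _
  refine not_dvd_choose_of_mod_le hq ?_ (Nat.mul_le_mul_right _ hba) ?_
  · rw [sq]
    exact Nat.mul_lt_mul'' haq hlt
  · rwa [mul_fracResidue_one_mod, mul_fracResidue_one_mod]

theorem stmt_1_general {m a b : ℕ} (hm : 0 < m) (hba : b ≤ a) (hmab : m ∣ a → m ∣ b) :
    ∃ n, 0 < n ∧ ¬ m * n - 1 ∣ (a * n).choose (b * n) := by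
  obtain ⟨q, hq, hmq, haq, hle⟩ := exists_prime_fracResidue_le hm hba hmab
  have : NeZero q := ⟨hq.ne_zero⟩
  have hdvd : q ∣ m * fracResidue q m 1 - 1 := (mul_fracResidue_one_modEq hmq).symm.dvd'
  exact ⟨fracResidue q m 1, fracResidue_one_pos hq.one_lt hmq, fun h =>
    not_dvd_choose_mul_fracResidue_one hq haq hba hle (hdvd.trans h)⟩

/-- For any odd prime `p` and positive integers `a > b` with `p ∤ a`, there exists a
positive integer `n` such that `p*n - 1` does not divide `C(a*n, b*n)`. -/
theorem stmt_1 (p : ℕ) (hp : p.Prime) (hodd : Odd p)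
    (a b : ℕ) (hb : 0 < b) (hab : b < a) (hpa : ¬ p ∣ a) :
    ∃ n : ℕ, 0 < n ∧ ¬ (p * n - 1 ∣ Nat.choose (a * n) (b * n)) :=
  stmt_1_general hp.pos hab.le fun h => absurd h hpa
end

section
/- Let p be an odd prime, let r be an integer with 1 ≤ r ≤ p−1, and set γ = (p²r + p² + r² − pr)/(p²(p+1)). Suppose M is a real number such that for every real x ≥ M there exists a prime q with x < q < (1 + (p−r)²/(p r (p+1)))·x and q ≡ −1 (mod p). Then for all positive integers c and k with c ≥ M and pk + r ≤ cp(1−γ), there exists a positive integer n such that pn−1 does not divide the binomial coefficient C(pcn, (pk+r)n). -/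
/-!
Write `q = p * n - 1` for the prime supplied by the short-interval hypothesis. In base `q` the
number `p * c * n` has digits `c, c`, and `(p * k + r) * n` has digits `k, k + r * n` (leading digit
first). By Lucas' theorem `q` cannot divide the binomial coefficient once `k + r * n ≤ c < q`. If
`q < t * c`, then `k + r * n ≤ c` follows from `p * k + r ≤ c * (p - r * t)`, and `γ` is chosen so
that `p * γ = r * t` for `t = 1 + (p - r)² / (p * r * (p + 1))`.
-/

theorem choose_add_mul_modEq_choose_mul_choose {q a b : ℕ} (hq : q.Prime) (haq : a < q)
    (hbq : b < q) (m l : ℕ) :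
    (a + q * m).choose (b + q * l) ≡ a.choose b * m.choose l [MOD q] := by
  have := Fact.mk hq
  simpa only [Nat.add_mul_mod_self_left, Nat.add_mul_div_left _ _ hq.pos, Nat.mod_eq_of_lt haq,
    Nat.mod_eq_of_lt hbq, Nat.div_eq_of_lt haq, Nat.div_eq_of_lt hbq, zero_add] using
    Choose.choose_modEq_choose_mod_mul_choose_div_nat (p := q) (n := a + q * m) (k := b + q * l)

theorem not_prime_dvd_choose_add_mul {q a b m l : ℕ} (hq : q.Prime) (haq : a < q) (hmq : m < q)
    (hba : b ≤ a) (hlm : l ≤ m) :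
    ¬ q ∣ (a + q * m).choose (b + q * l) := by
  rw [(choose_add_mul_modEq_choose_mul_choose hq haq (hba.trans_lt haq) m l).dvd_iff dvd_rfl,
    ← hq.coprime_iff_not_dvd]
  exact (hq.coprime_choose_of_lt haq hba).mul_right (hq.coprime_choose_of_lt hmq hlm)

theorem not_prime_dvd_choose_of_succ_eq_mul {q p n r c k : ℕ} (hq : q.Prime) (hqn : q + 1 = p * n)
    (hcq : c < q) (hkc : k + r * n ≤ c) :
    ¬ q ∣ (p * c * n).choose ((p * k + r) * n) := by
  have top_digits : p * c * n = c + q * c := by grind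
  have bottom_digits : (p * k + r) * n = (k + r * n) + q * k := by grind
  rw [top_digits, bottom_digits]
  exact not_prime_dvd_choose_add_mul hq hcq hcq hkc ((Nat.le_add_right _ _).trans hkc)

section Field

variable {K : Type*} [Field K]

theorem mul_one_sub_gamma_eq {p r : K} (hp : p ≠ 0) (hr : r ≠ 0) (hp1 : p + 1 ≠ 0) :
    p * (1 - (p ^ 2 * r + p ^ 2 + r ^ 2 - p * r) / (p ^ 2 * (p + 1))) =
      p - r * (1 + (p - r) ^ 2 / (p * r * (p + 1))) := by
  field_simp
  ring

variable [LinearOrder K] [IsStrictOrderedRing K]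

theorem add_mul_le_of_lt_mul {q p n r c k : ℕ} {t : K} (hqn : q + 1 = p * n)
    (hqt : (q : K) < t * c) (hbound : (p : K) * k + r ≤ c * (p - r * t)) :
    k + r * n ≤ c := by
  have hp : 0 < p := Nat.pos_of_mul_pos_right (hqn ▸ q.succ_pos : 0 < p * n)
  have hqn' : (q : K) + 1 = p * n := mod_cast hqn
  have scaled : (p : K) * (k + r * n) ≤ p * c := by
    calc (p : K) * (k + r * n) = p * k + r + r * q := by linear_combination -r * hqn'
      _ ≤ c * (p - r * t) + r * (t * c) := by gcongr
      _ = p * c := by ring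
  exact_mod_cast le_of_mul_le_mul_left scaled (Nat.cast_pos.mpr hp)

theorem stmt_2_general {p r c k q : ℕ} {t : K} (hq : q.Prime) (hcq : c < q)
    (hqt : (q : K) < t * c) (hqp : (q : ℤ) ≡ -1 [ZMOD (p : ℤ)])
    (hbound : (p : K) * k + r ≤ c * (p - r * t)) :
    ∃ n : ℕ, 0 < n ∧ ¬ (p * n - 1 ∣ Nat.choose (p * c * n) ((p * k + r) * n)) := by
  obtain ⟨n, hqn⟩ : p ∣ q + 1 := by
    simpa only [sub_neg_eq_add, ← Nat.cast_succ, Int.natCast_dvd_natCast] using hqp.symm.dvd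
  refine ⟨n, Nat.pos_of_mul_pos_left (hqn ▸ q.succ_pos : 0 < p * n), ?_⟩
  rw [← hqn, Nat.add_sub_cancel]
  exact not_prime_dvd_choose_of_succ_eq_mul hq hqn hcq (add_mul_le_of_lt_mul hqn hqt hbound)

end Field

/-- Theorem 2.2(i): let `p` be an odd prime, `1 ≤ r ≤ p-1`, and
`γ = (p²r + p² + r² - pr)/(p²(p+1))`.  Suppose `M` is a real number such that for
every `x ≥ M` there is a prime `q ≡ -1 (mod p)` with `x < q < (1 + (p-r)²/(pr(p+1)))x`.
Then for all positive integers `c ≥ M` and `k` with `pk + r ≤ cp(1-γ)`, there is a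
positive integer `n` such that `pn - 1` does not divide `C(pcn, (pk+r)n)`. -/
theorem stmt_2 (p : ℕ) (hp : p.Prime) (hodd : Odd p)
    (r : ℕ) (hr1 : 1 ≤ r) (hr2 : r ≤ p - 1)
    (M : ℝ)
    (hM : ∀ x : ℝ, M ≤ x → ∃ q : ℕ, q.Prime ∧ x < (q : ℝ) ∧
      (q : ℝ) < (1 + ((p : ℝ) - r) ^ 2 / ((p : ℝ) * r * ((p : ℝ) + 1))) * x ∧
      (q : ℤ) ≡ -1 [ZMOD (p : ℤ)])
    (c k : ℕ) (hc : 0 < c) (hk : 0 < k) (hcM : M ≤ (c : ℝ))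
    (hbound : (p : ℝ) * k + r ≤
      (c : ℝ) * p * (1 - ((p : ℝ) ^ 2 * r + (p : ℝ) ^ 2 + (r : ℝ) ^ 2 - (p : ℝ) * r) /
        ((p : ℝ) ^ 2 * ((p : ℝ) + 1)))) :
    ∃ n : ℕ, 0 < n ∧ ¬ (p * n - 1 ∣ Nat.choose (p * c * n) ((p * k + r) * n)) := by
  obtain ⟨q, hq, hcq, hqt, hqp⟩ := hM c hcM
  have hγ := mul_one_sub_gamma_eq (K := ℝ) (Nat.cast_ne_zero.mpr hp.ne_zero)
    (Nat.cast_ne_zero.mpr (Nat.one_le_iff_ne_zero.mp hr1)) p.cast_add_one_ne_zero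
  exact stmt_2_general hq (mod_cast hcq) hqt hqp (by rwa [mul_assoc, hγ] at hbound)
end

section
/- Let p be an odd prime, let r be an integer with 1 ≤ r ≤ (p−3)/2, and set γ = (p²r + p² + r² − pr)/(p²(p+1)). Suppose M' is a real number such that for every real x ≥ M' there exist two distinct primes q, q' with x < q < q' < (1 + (p−(2r+1))/(p+1))·x and q ≡ q' ≡ −1 (mod p). Then for all positive integers c and k with k ≥ 2M', k ≥ p, and cp(1−γ) < pk + r < c(p−r), there exists a positive integer n such that pn−1 does not divide the binomial coefficient C(pcn, (pk+r)n). -/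
/-!
Apply the hypothesis at `x = c / 2` and let `q` be the larger of the two primes; as the smaller one
already exceeds `c / 2`, we get `c + 1 < 2 * q`. Since `q + 1 = p * n` for some `n`, we have
`p * n - 1 = q`, `p * c * n = c * (q + 1)` and `(p * k + r) * n = k * (q + 1) + r * n`. The size of
`q` forces `q ≤ k` and `k + r * n ≤ c`, so in base `q` these two numbers have the digits
`1, c - q + 1, c - q` and `1, k - q + 1, k - q + r * n`. Each digit of the second is at most the
corresponding digit of the first, and Lucas' theorem shows that `q` does not divide the binomial
coefficient.
-/

section Lucas

variable {q : ℕ}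

theorem not_prime_dvd_choose_of_lt {a i : ℕ} (hq : q.Prime) (ha : a < q) (hi : i ≤ a) :
    ¬ q ∣ a.choose i := fun h ↦
  ha.not_ge <| hq.dvd_factorial.1 <| h.trans <|
    Dvd.intro _ (by rw [← mul_assoc, Nat.choose_mul_factorial_mul_factorial hi])

theorem prime_dvd_choose_add_mul_iff {a i A I : ℕ} (hq : q.Prime) (ha : a < q) (hi : i ≤ a) :
    q ∣ (a + q * A).choose (i + q * I) ↔ q ∣ A.choose I := by
  have : Fact q.Prime := ⟨hq⟩
  have lucas : (a + q * A).choose (i + q * I) ≡ a.choose i * A.choose I [MOD q] := by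
    simpa only [Nat.add_mul_mod_self_left, Nat.add_mul_div_left _ _ hq.pos,
      Nat.mod_eq_of_lt ha, Nat.mod_eq_of_lt (hi.trans_lt ha), Nat.div_eq_of_lt ha,
      Nat.div_eq_of_lt (hi.trans_lt ha), zero_add] using
      Choose.choose_modEq_choose_mod_mul_choose_div_nat
        (n := a + q * A) (k := i + q * I) (p := q)
  rw [lucas.dvd_iff dvd_rfl, hq.dvd_mul, or_iff_right (not_prime_dvd_choose_of_lt hq ha hi)]

theorem not_prime_dvd_choose_mul_succ {c k s : ℕ} (hq : q.Prime) (hqk : q ≤ k)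
    (hks : k + s ≤ c) (hcq : c + 1 < 2 * q) :
    ¬ q ∣ (c * (q + 1)).choose (k * (q + 1) + s) := by
  obtain ⟨b, rfl⟩ := Nat.exists_eq_add_of_le (show q ≤ c by omega)
  obtain ⟨d, rfl⟩ := Nat.exists_eq_add_of_le hqk
  have top_digits : (q + b) * (q + 1) = b + q * (b + 1 + q * 1) := by ring
  have bottom_digits : (q + d) * (q + 1) + s = d + s + q * (d + 1 + q * 1) := by ring
  rw [top_digits, bottom_digits, prime_dvd_choose_add_mul_iff hq (by omega) (by omega),
    prime_dvd_choose_add_mul_iff hq (by omega) (by omega), Nat.choose_self]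
  exact hq.not_dvd_one

end Lucas

/-- The constant `γ` of the paper: `1 - γ` is the lower bound imposed on the ratio
`(p * k + r) / (c * p)`. The arguments are field elements so that `/` is exact division. -/
def gamma {K : Type*} [Field K] (p r : K) : K :=
  (p ^ 2 * r + p ^ 2 + r ^ 2 - p * r) / (p ^ 2 * (p + 1))

theorem one_sub_gamma {K : Type*} [Field K] {p : K} (hp : p ≠ 0) (hp' : p + 1 ≠ 0) (r : K) :
    1 - gamma p r = (p - r) * (p ^ 2 + r) / (p ^ 2 * (p + 1)) := by
  unfold gamma
  field_simp
  ring

section Bounds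

variable {K : Type*} [Field K] [LinearOrder K] [IsStrictOrderedRing K] {p r c k q : K}

theorem lt_of_mul_add_lt_mul_sub (hp : 0 ≤ p) (hr : 0 ≤ r) (hc : 0 ≤ c)
    (h : p * k + r < c * (p - r)) : k < c := by
  have : p * k < p * c := by linarith [mul_nonneg hc hr]
  exact lt_of_mul_lt_mul_left this hp

theorem mul_add_one_lt_of_lt_half (hp : 0 ≤ p)
    (h : q < (1 + (p - (2 * r + 1)) / (p + 1)) * (c / 2)) : q * (p + 1) < c * (p - r) := by
  have hp' : 0 < p + 1 := by positivity
  rwa [← lt_div_iff₀ hp',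
    show c * (p - r) / (p + 1) = (1 + (p - (2 * r + 1)) / (p + 1)) * (c / 2) by field_simp; ring]

theorem lt_add_one_of_one_sub_gamma_lt (hr : 0 ≤ r) (hrp : r < p) (hk : 0 ≤ k)
    (hq : q * (p + 1) < c * (p - r)) (hlow : c * p * (1 - gamma p r) < p * k + r) :
    q < k + 1 := by
  have hp : 0 < p := hr.trans_lt hrp
  have hlow' : c * (p - r) * (p ^ 2 + r) < (p * k + r) * (p * (p + 1)) := by
    rw [← div_lt_iff₀ (by positivity)]
    convert hlow using 1
    rw [one_sub_gamma hp.ne' (by positivity)]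
    field_simp
  have : q * ((p + 1) * (p ^ 2 + r)) < (k + 1) * ((p + 1) * (p ^ 2 + r)) := calc
    q * ((p + 1) * (p ^ 2 + r)) = q * (p + 1) * (p ^ 2 + r) := by ring
    _ < c * (p - r) * (p ^ 2 + r) := by gcongr
    _ < (p * k + r) * (p * (p + 1)) := hlow'
    _ = (k + 1) * ((p + 1) * (p ^ 2 + r)) - (p + 1) * (p * (p - r) + k * r + r) := by ring
    _ ≤ (k + 1) * ((p + 1) * (p ^ 2 + r)) := by
      have := sub_pos.2 hrp
      exact sub_le_self _ (by positivity)
  exact lt_of_mul_lt_mul_right this (by positivity)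

end Bounds

theorem add_mul_le_of_mul_eq_succ {p r c k q n : ℕ} (hn : p * n = q + 1) (hqc : q ≤ c)
    (h : p * k + r + c * r ≤ c * p) : k + r * n ≤ c := by
  have hp : 0 < p := pos_of_mul_pos_left (hn.symm ▸ q.succ_pos : 0 < p * n) n.zero_le
  refine Nat.le_of_mul_le_mul_left ?_ hp
  calc p * (k + r * n) = p * k + r * (p * n) := by ring
    _ = p * k + r + q * r := by rw [hn]; ring
    _ ≤ p * k + r + c * r := by gcongr
    _ ≤ p * c := by rwa [mul_comm p c]

theorem stmt_3_general {p r c k q : ℕ} (hq : q.Prime) (hmod : (q : ℤ) ≡ -1 [ZMOD (p : ℤ)])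
    (hcq : c + 1 < 2 * q)
    (hqc : (q : ℝ) < (1 + ((p : ℝ) - (2 * (r : ℝ) + 1)) / ((p : ℝ) + 1)) * ((c : ℝ) / 2))
    (hlow : (c : ℝ) * p * (1 - gamma (p : ℝ) r) < (p : ℝ) * k + r)
    (hhigh : (p : ℝ) * k + r < (c : ℝ) * ((p : ℝ) - r)) :
    ∃ n : ℕ, 0 < n ∧ ¬ (p * n - 1 ∣ Nat.choose (p * c * n) ((p * k + r) * n)) := by
  have hrp : (r : ℝ) < p :=
    sub_pos.1 <| pos_of_mul_pos_right (lt_of_le_of_lt (by positivity) hhigh) c.cast_nonneg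
  have hkc : k < c := by
    exact_mod_cast lt_of_mul_add_lt_mul_sub p.cast_nonneg r.cast_nonneg c.cast_nonneg hhigh
  have hqk : q < k + 1 := by
    exact_mod_cast lt_add_one_of_one_sub_gamma_lt r.cast_nonneg hrp k.cast_nonneg
      (mul_add_one_lt_of_lt_half p.cast_nonneg hqc) hlow
  have hhigh' : p * k + r + c * r ≤ c * p := by
    have : (p : ℝ) * k + r + c * r ≤ c * p := by linarith
    exact_mod_cast this
  obtain ⟨n, hn⟩ : p ∣ q + 1 := Int.natCast_dvd_natCast.1 (by simpa using hmod.symm.dvd)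
  refine ⟨n, pos_of_mul_pos_right (hn ▸ q.succ_pos : 0 < p * n) p.zero_le, ?_⟩
  rw [← hn, Nat.add_sub_cancel, show p * c * n = c * (q + 1) by rw [hn]; ring,
    show (p * k + r) * n = k * (q + 1) + r * n by rw [hn]; ring]
  exact not_prime_dvd_choose_mul_succ hq (by omega)
    (add_mul_le_of_mul_eq_succ hn.symm (by omega) hhigh') hcq

/-- Theorem 2.2(ii): let `p` be an odd prime, `1 ≤ r ≤ (p-3)/2`, and
`γ = (p²r + p² + r² - pr)/(p²(p+1))`.  Suppose `M'` is a real number such that for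
every `x ≥ M'` there are two distinct primes `q < q'`, both `≡ -1 (mod p)`, in the
interval `(x, (1 + (p-(2r+1))/(p+1))x)`.  Then for all positive integers `c` and
`k ≥ 2M'` with `k ≥ p` and `cp(1-γ) < pk + r < c(p-r)`, there is a positive integer
`n` such that `pn - 1` does not divide `C(pcn, (pk+r)n)`. -/
theorem stmt_3 (p : ℕ) (hp : p.Prime) (hodd : Odd p)
    (r : ℕ) (hr1 : 1 ≤ r) (hr2 : 2 * r + 3 ≤ p)
    (M' : ℝ)
    (hM' : ∀ x : ℝ, M' ≤ x → ∃ q q' : ℕ, q.Prime ∧ q'.Prime ∧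
      x < (q : ℝ) ∧ (q : ℝ) < (q' : ℝ) ∧
      (q' : ℝ) < (1 + ((p : ℝ) - (2 * (r : ℝ) + 1)) / ((p : ℝ) + 1)) * x ∧
      (q : ℤ) ≡ -1 [ZMOD (p : ℤ)] ∧ (q' : ℤ) ≡ -1 [ZMOD (p : ℤ)])
    (c k : ℕ) (hc : 0 < c) (hk : 0 < k)
    (hkM : 2 * M' ≤ (k : ℝ)) (hkp : p ≤ k)
    (hlow : (c : ℝ) * p * (1 - ((p : ℝ) ^ 2 * r + (p : ℝ) ^ 2 + (r : ℝ) ^ 2 - (p : ℝ) * r) /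
        ((p : ℝ) ^ 2 * ((p : ℝ) + 1))) < (p : ℝ) * k + r)
    (hhigh : (p : ℝ) * k + r < (c : ℝ) * ((p : ℝ) - r)) :
    ∃ n : ℕ, 0 < n ∧ ¬ (p * n - 1 ∣ Nat.choose (p * c * n) ((p * k + r) * n)) := by
  have hkc : (k : ℝ) < c :=
    lt_of_mul_add_lt_mul_sub p.cast_nonneg r.cast_nonneg c.cast_nonneg hhigh
  obtain ⟨q, q', -, hq', hcq, hqq', hq'c, -, hmod⟩ := hM' (c / 2) (by linarith)
  have hcq' : c < 2 * q := by exact_mod_cast (div_lt_iff₀' two_pos).1 hcq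
  exact stmt_3_general hq' hmod (by have := Nat.cast_lt.1 hqq'; omega) hq'c hlow hhigh
end

section
/- For any positive integer m, there exist positive integers a and b with am > b such that an−1 divides the binomial coefficient C(amn, bn) for all positive integers n. -/
/-!
Since `r * m * k ≡ m` modulo `d = r * k - 1`, the falling factorial of length `m + 1` from
`r * m * k` is divisible by `d`. Hence `d` divides the product of `(r * m * k).choose k` and the
falling factorial of length `m + 1` from `r * m * k - k`. After multiplication by `r`, the factors
of the latter are congruent modulo `d` to the numbers `r * l - 1` with `l ≤ m`. Choosing `k` to be
a multiple of all of these makes them coprime to `d`, because `d` is coprime to `k`.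
-/

open scoped Nat

theorem choose_mul_choose_sub_comm (n k j : ℕ) :
    n.choose k * (n - k).choose j = n.choose j * (n - j).choose k := by
  have hk := Nat.choose_mul (n := n) (Nat.le_add_right k j)
  have hj := Nat.choose_mul (n := n) (Nat.le_add_left j k)
  rw [Nat.add_sub_cancel_left] at hk
  rw [Nat.add_sub_cancel_right] at hj
  rw [← hk, ← hj, Nat.choose_symm_add]

theorem choose_mul_descFactorial_sub (n k j : ℕ) :
    n.choose k * (n - k).descFactorial j = n.descFactorial j * (n - j).choose k := by
  rw [Nat.descFactorial_eq_factorial_mul_choose, Nat.descFactorial_eq_factorial_mul_choose,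
    mul_left_comm, choose_mul_choose_sub_comm, mul_assoc]

theorem dvd_choose_of_dvd_sub_of_coprime {d n k j : ℕ} (hdvd : d ∣ n - j)
    (hcop : ∀ i ≤ j, d.Coprime (n - k - i)) : d ∣ n.choose k := by
  have hcop_desc : d.Coprime ((n - k).descFactorial (j + 1)) := by
    rw [Nat.descFactorial_eq_prod_range]
    exact Nat.Coprime.prod_right fun i hi => hcop i (Finset.mem_range_succ_iff.mp hi)
  refine hcop_desc.dvd_of_dvd_mul_right ?_
  rw [choose_mul_descFactorial_sub, Nat.descFactorial_succ]
  exact (hdvd.mul_right _).mul_right _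

theorem isCoprime_mul_sub_one_of_dvd {R : Type*} [CommRing R] {r m k i : R}
    (hdvd : r * (m - i) - 1 ∣ k) : IsCoprime (r * k - 1) (r * m * k - k - i) := by
  have hk : IsCoprime (r * k - 1) k := ⟨-1, r, by ring⟩
  have hmul : IsCoprime (r * k - 1) (r * (r * m * k - k - i)) := by
    have hadd := (hk.of_isCoprime_of_dvd_right hdvd).add_mul_left_right (r * m - 1)
    convert hadd using 1
    ring
  exact hmul.of_mul_right_right

theorem mul_sub_one_dvd_factorial {r l m : ℕ} (hr : 1 < r) (hl : l ≤ m) :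
    (r * l - 1 : ℤ) ∣ ((r * m)! : ℕ) := by
  rcases l.eq_zero_or_pos with rfl | hl_pos
  · simp
  · have hrl : 1 < r * l := one_lt_mul_of_lt_of_le hr hl_pos
    have hle : r * l - 1 ≤ r * m := (Nat.sub_le _ _).trans (Nat.mul_le_mul_left r hl)
    have hdvd : r * l - 1 ∣ (r * m)! := Nat.dvd_factorial (Nat.sub_pos_of_lt hrl) hle
    simpa [Nat.cast_sub hrl.le] using Int.natCast_dvd_natCast.mpr hdvd

theorem coprime_mul_sub_one_of_factorial_dvd {r m k i : ℕ} (hr : 1 < r) (hm : 0 < m) (hk : 0 < k)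
    (hdvd : (r * m)! ∣ k) (hi : i ≤ m) : (r * k - 1).Coprime (r * m * k - k - i) := by
  have hrk : 1 ≤ r * k := Nat.mul_pos (by lia) hk
  have hki : k + i ≤ r * m * k :=
    calc k + i ≤ m * k + m * k :=
          add_le_add (Nat.le_mul_of_pos_left k hm) (hi.trans (Nat.le_mul_of_pos_right m hk))
      _ = 2 * (m * k) := (two_mul _).symm
      _ ≤ r * (m * k) := Nat.mul_le_mul_right _ hr
      _ = r * m * k := (mul_assoc ..).symm
  have hdvd_int : (r * ((m : ℤ) - i) - 1) ∣ k := by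
    rw [← Nat.cast_sub hi]
    exact (mul_sub_one_dvd_factorial hr (Nat.sub_le m i)).trans (Int.natCast_dvd_natCast.mpr hdvd)
  rw [← Nat.isCoprime_iff_coprime, Nat.sub_sub, Nat.cast_sub hrk, Nat.cast_sub hki]
  push_cast
  rw [← sub_sub]
  exact isCoprime_mul_sub_one_of_dvd hdvd_int

theorem mul_sub_one_dvd_choose_of_factorial_dvd {r m k : ℕ} (hr : 1 < r) (hm : 0 < m) (hk : 0 < k)
    (hdvd : (r * m)! ∣ k) : r * k - 1 ∣ (r * m * k).choose k := by
  have hsub : r * m * k - m = m * (r * k - 1) := by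
    rw [Nat.mul_sub_one, mul_left_comm, mul_assoc]
  exact dvd_choose_of_dvd_sub_of_coprime (hsub ▸ Nat.dvd_mul_left _ m)
    fun _ hi => coprime_mul_sub_one_of_factorial_dvd hr hm hk hdvd hi

/-- For any positive integer `m`, there exist positive integers `a` and `b` with
`a*m > b` such that `a*n - 1` divides `C(a*m*n, b*n)` for all positive integers `n`. -/
theorem stmt_6 (m : ℕ) (hm : 0 < m) :
    ∃ a b : ℕ, 0 < a ∧ 0 < b ∧ b < a * m ∧
      ∀ n : ℕ, 0 < n → (a * n - 1) ∣ Nat.choose (a * m * n) (b * n) := by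
  have hb : 0 < (2 * m)! := Nat.factorial_pos _
  refine ⟨2 * (2 * m)!, (2 * m)!, by positivity, hb, by nlinarith, fun n hn => ?_⟩
  have hdvd := mul_sub_one_dvd_choose_of_factorial_dvd one_lt_two hm (Nat.mul_pos hb hn)
    (Nat.dvd_mul_right (2 * m)! n)
  convert hdvd using 2 <;> ring
end

section
/- Let m be a positive integer and let t ≥ 3 be an index such that the t-th prime p_t satisfies p_t > 3m. Set a = 6·p_3·p_4⋯p_t and b = 4·p_3·p_4⋯p_t (the products taken over the primes p_3 = 5 up to p_t). Then am > b, and for every positive integer n, an−1 divides the binomial coefficient C(amn, bn). -/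
/-!
Let `q` be a power of a prime `p` dividing `a * n - 1`, so that `a * n ≡ 1 [MOD q]`. Then
`a * m * n ≡ m` and `3 * (b * n) = 2 * (a * n) ≡ 2`. As `p` does not divide `a`, while every
prime up to `3 * m` does, `q > 3 * m`. If the residue `ρ` of `b * n` were at most `m`, then
`3 * ρ < q` and `3 * ρ ≡ 2` would force `3 * ρ = 2`. So `ρ > m`, that is, subtracting `b * n`
from `a * m * n` in base `p` borrows at the digit attached to `q`. By Kummer's theorem each such
borrow contributes a factor `p` to the binomial coefficient.
-/

theorem le_mod_add_sub_mod_of_mod_lt_mod {N k q : ℕ} (hkN : k ≤ N) (h : N % q < k % q) :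
    q ≤ k % q + (N - k) % q := by
  by_contra! hlt
  have hadd : N % q = k % q + (N - k) % q := by
    rw [← Nat.add_mod_of_add_mod_lt hlt, Nat.add_sub_cancel' hkN]
  omega

theorem prime_pow_dvd_choose_of_forall_mod_lt_mod {p e N k : ℕ} (hp : p.Prime)
    (h : ∀ i ∈ Finset.Icc 1 e, N % p ^ i < k % p ^ i) : p ^ e ∣ N.choose k := by
  rcases lt_or_ge N k with hNk | hkN
  · simp [Nat.choose_eq_zero_of_lt hNk]
  have hlog : Nat.log p N < Nat.log p N + e + 1 := by omega
  rw [hp.pow_dvd_iff_le_factorization (Nat.choose_pos hkN).ne',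
    Nat.factorization_choose hp hkN hlog]
  calc e = (Finset.Icc 1 e).card := by simp
    _ ≤ _ := Finset.card_le_card fun i hi => by
      have hi' := Finset.mem_Icc.1 hi
      exact Finset.mem_filter.2 ⟨Finset.mem_Ico.2 (by omega),
        le_mod_add_sub_mod_of_mod_lt_mod hkN (h i hi)⟩

theorem dvd_choose_of_forall_isPrimePow_mod_lt_mod {d N k : ℕ}
    (h : ∀ q, IsPrimePow q → q ∣ d → N % q < k % q) : d ∣ N.choose k := by
  refine (Nat.dvd_iff_prime_pow_dvd_dvd _ _).2 fun p e hp hpe => ?_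
  refine prime_pow_dvd_choose_of_forall_mod_lt_mod hp fun i hi => ?_
  obtain ⟨hi_pos, hie⟩ := Finset.mem_Icc.1 hi
  exact h _ (hp.isPrimePow.pow (by omega)) ((pow_dvd_pow p hie).trans hpe)

theorem mod_lt_mod_of_mul_modEq {q r s m x y : ℕ} (hrm : r * m < q) (hsq : s < q)
    (hrs : ¬ r ∣ s) (hx : x ≡ m [MOD q]) (hy : r * y ≡ s [MOD q]) : x % q < y % q := by
  by_contra! hyx
  have hym : y % q ≤ m := hyx.trans (hx.trans_le (Nat.mod_le m q))
  have hlt : r * (y % q) < q := (Nat.mul_le_mul_left r hym).trans_lt hrm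
  have hmod : r * (y % q) ≡ s [MOD q] := ((Nat.mod_modEq y q).mul_left r).trans hy
  exact hrs ⟨y % q, (hmod.eq_of_lt_of_lt hlt hsq).symm⟩

theorem lt_of_isPrimePow_of_coprime {a q B : ℕ} (hq : IsPrimePow q) (haq : a.Coprime q)
    (hB : ∀ p, p.Prime → p ≤ B → p ∣ a) : B < q := by
  by_contra! hqB
  have hp : q.minFac.Prime := Nat.minFac_prime hq.ne_one
  have hpa : q.minFac ∣ a := hB _ hp ((Nat.minFac_le hq.pos).trans hqB)
  exact Nat.not_coprime_of_dvd_of_dvd hp.one_lt hpa q.minFac_dvd haq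

theorem prime_dvd_prod_range_nth_prime {p t : ℕ} (hp : p.Prime) (hpt : p < Nat.nth Nat.Prime t) :
    p ∣ ∏ i ∈ Finset.range t, Nat.nth Nat.Prime i := by
  have hcount : Nat.count Nat.Prime p < t := by
    rwa [← Nat.nth_lt_nth Nat.infinite_setOfPred_prime, Nat.nth_count hp]
  simpa only [Nat.nth_count hp] using
    Finset.dvd_prod_of_mem (Nat.nth Nat.Prime) (Finset.mem_range.2 hcount)

theorem six_mul_prod_Icc_nth_prime {t : ℕ} (ht : 2 ≤ t) :
    6 * ∏ i ∈ Finset.Icc 3 t, Nat.nth Nat.Prime (i - 1) =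
      ∏ i ∈ Finset.range t, Nat.nth Nat.Prime i := by
  induction t, ht using Nat.le_induction with
  | base => simp [Finset.prod_range_succ]
  | succ t ht ih =>
    rw [Finset.prod_Icc_succ_top (by omega), ← mul_assoc, ih, Finset.prod_range_succ,
      Nat.add_sub_cancel]

theorem stmt_7_general {r s m a b : ℕ} (ha : 0 < a) (hab : r * b = s * a) (hrs : ¬ r ∣ s)
    (hsm : s < r * m) (hprime : ∀ p, p.Prime → p ≤ r * m → p ∣ a) :
    b < a * m ∧ ∀ n : ℕ, 0 < n → (a * n - 1) ∣ Nat.choose (a * m * n) (b * n) := by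
  constructor
  · refine lt_of_mul_lt_mul_left (a := r) ?_ r.zero_le
    calc r * b = s * a := hab
      _ < r * m * a := Nat.mul_lt_mul_of_pos_right hsm ha
      _ = r * (a * m) := by ring
  intro n hn
  refine dvd_choose_of_forall_isPrimePow_mod_lt_mod fun q hq hqd => ?_
  have han : a * n ≡ 1 [MOD q] := ((Nat.modEq_iff_dvd' (Nat.mul_pos ha hn)).2 hqd).symm
  have hrmq : r * m < q :=
    lt_of_isPrimePow_of_coprime hq (Nat.coprime_of_mul_modEq_one n han) hprime
  have hamn : a * m * n ≡ m [MOD q] := by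
    simpa only [mul_right_comm, one_mul] using han.mul_right m
  have hbn : r * (b * n) ≡ s [MOD q] := by
    simpa only [← mul_assoc, hab, mul_one] using han.mul_left s
  exact mod_lt_mod_of_mul_modEq hrmq (hsm.trans hrmq) hrs hamn hbn

/-- Let `m` be a positive integer and `t ≥ 3` an index with the `t`-th prime `p_t`
(in the increasing enumeration `p_1 = 2, p_2 = 3, p_3 = 5, …`, so `p_i` is
`Nat.nth Nat.Prime (i-1)`) satisfying `p_t > 3m`.  Set `a = 6·p_3⋯p_t` and
`b = 4·p_3⋯p_t`.  Then `a*m > b` and `a*n - 1` divides `C(a*m*n, b*n)` for every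
positive integer `n`. -/
theorem stmt_7 (m : ℕ) (hm : 0 < m) (t : ℕ) (ht : 3 ≤ t)
    (hpt : 3 * m < Nat.nth Nat.Prime (t - 1))
    (a b : ℕ)
    (ha : a = 6 * ∏ i ∈ Finset.Icc 3 t, Nat.nth Nat.Prime (i - 1))
    (hb : b = 4 * ∏ i ∈ Finset.Icc 3 t, Nat.nth Nat.Prime (i - 1)) :
    b < a * m ∧ ∀ n : ℕ, 0 < n → (a * n - 1) ∣ Nat.choose (a * m * n) (b * n) := by
  have hprod : 0 < ∏ i ∈ Finset.Icc 3 t, Nat.nth Nat.Prime (i - 1) :=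
    Finset.prod_pos fun i _ => (Nat.prime_nth_prime (i - 1)).pos
  refine stmt_7_general (r := 3) (s := 2) (by omega) (by omega) (by decide) (by omega)
    fun p hp hpm => ?_
  rw [ha, six_mul_prod_Icc_nth_prime (by omega)]
  have hmono : Nat.nth Nat.Prime (t - 1) ≤ Nat.nth Nat.Prime t :=
    Nat.nth_monotone Nat.infinite_setOfPred_prime (t.sub_le 1)
  exact prime_dvd_prod_range_nth_prime hp (by omega)
end

section
/- Let m be a positive integer and let t ≥ 3 be an index such that the t-th prime p_t satisfies p_t > 3m. Set a = 6·p_3·p_4⋯p_t and b = 4·p_3·p_4⋯p_t. If n is a positive integer and q is a prime dividing an−1, then the remainder of bn upon division by q satisfies 3·(bn mod q) > q; in particular, bn mod q > m. -/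
/-!
Since `2 * a = 3 * b`, the congruence `a * n ≡ 1` modulo `q` gives `3 * (b * n) ≡ 2`. The product
`a` of the first `t` primes is invertible modulo `q`, so `q` exceeds `p_t`. If `r` is the remainder
of `b * n`, then the multiple `3 * r` of `3` is congruent to `2` without being equal to it, hence is
larger than `q`.
-/

theorem lt_mul_mod_of_mul_modEq {c d q x : ℕ} (hdq : d < q) (hcd : ¬ c ∣ d)
    (h : c * x ≡ d [MOD q]) : q < c * (x % q) := by
  have hmod : c * (x % q) ≡ d [MOD q] := ((Nat.mod_modEq x q).mul_left c).trans h
  by_contra! hle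
  rcases hle.lt_or_eq with hlt | heq
  · exact hcd ⟨x % q, (hmod.eq_of_lt_of_lt hlt hdq).symm⟩
  · have hqd : q ∣ d := (hmod.dvd_iff dvd_rfl).mp heq.symm.dvd
    exact hcd (Nat.eq_zero_of_dvd_of_lt hqd hdq ▸ dvd_zero c)

theorem nth_lt_of_not_dvd_prod_range_nth {p : ℕ → Prop} {q k : ℕ} (hq : p q)
    (hdvd : ¬ q ∣ ∏ i ∈ Finset.range (k + 1), Nat.nth p i) : Nat.nth p k < q := by
  classical
  refine Nat.nth_lt_of_lt_count ?_
  contrapose! hdvd with hcount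
  have hfactor := Finset.dvd_prod_of_mem (Nat.nth p)
    (Finset.mem_range.mpr (Nat.lt_succ_of_le hcount))
  rwa [Nat.nth_count hq] at hfactor

/-- Let `m` be a positive integer and `t ≥ 3` an index with the `t`-th prime `p_t`
(in the increasing enumeration `p_1 = 2, p_2 = 3, p_3 = 5, …`, so `p_i` is
`Nat.nth Nat.Prime (i-1)`) satisfying `p_t > 3m`.  Set `a = 6·p_3⋯p_t` and
`b = 4·p_3⋯p_t`.  If `n` is a positive integer and `q` is a prime dividing
`a*n - 1`, then `3·(b*n mod q) > q`; in particular `b*n mod q > m`. -/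
theorem stmt_8 (m : ℕ) (hm : 0 < m) (t : ℕ) (ht : 3 ≤ t)
    (hpt : 3 * m < Nat.nth Nat.Prime (t - 1))
    (a b : ℕ)
    (ha : a = 6 * ∏ i ∈ Finset.Icc 3 t, Nat.nth Nat.Prime (i - 1))
    (hb : b = 4 * ∏ i ∈ Finset.Icc 3 t, Nat.nth Nat.Prime (i - 1))
    (n : ℕ) (hn : 0 < n) (q : ℕ) (hq : q.Prime) (hdvd : q ∣ a * n - 1) :
    q < 3 * (b * n % q) ∧ m < b * n % q := by
  have ha_prod : a = ∏ i ∈ Finset.range t, Nat.nth Nat.Prime i :=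
    ha.trans (six_mul_prod_Icc_nth_prime (by lia))
  have ha_pos : 0 < a := ha_prod ▸ Finset.prod_pos fun i _ => (Nat.prime_nth_prime i).pos
  have han : a * n ≡ 1 [MOD q] :=
    ((Nat.modEq_iff_dvd' (Nat.mul_pos ha_pos hn)).mpr hdvd).symm
  have hqa : ¬ q ∣ a :=
    hq.coprime_iff_not_dvd.mp (Nat.coprime_of_mul_modEq_one n han).symm
  have hpq : Nat.nth Nat.Prime (t - 1) < q := by
    refine nth_lt_of_not_dvd_prod_range_nth hq ?_
    rwa [Nat.sub_add_cancel (by lia), ← ha_prod]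
  have hbn : 3 * (b * n) ≡ 2 [MOD q] := by
    have hab : 3 * (b * n) = 2 * (a * n) := by rw [ha, hb]; ring
    exact hab ▸ han.mul_left 2
  have hmod : q < 3 * (b * n % q) :=
    lt_mul_mod_of_mul_modEq (by lia) (by decide) hbn
  exact ⟨hmod, by lia⟩
end

section
/- For every positive integer n and every pair (α, β) ∈ {(0,0), (1,0), (1,1)}, the binomial coefficient C(4n+α, 2n+β) is congruent to 0, 1, or 4 modulo 5. -/
/-!
The residues `0, 1, 4` are the squares modulo `5`. By Lucas' theorem `centralBinom` is
multiplicative over base-`p` digits modulo `p`, and so is `m ↦ a ^ m` since `a ^ p = a`. For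
`p = 5` and `a = 2` every digit contributes a square, so `2 ^ m * centralBinom m` is always a
square modulo `5`. It remains to divide by even powers of `2`: for `m = 2 * n` this gives
`(4 * n).choose (2 * n)`, and for `m = 2 * n + 1` it gives `(4 * n + 1).choose (2 * n)`, which is
half of `centralBinom (2 * n + 1)`.
-/

theorem centralBinom_modEq_centralBinom_mod_mul_centralBinom_div (p : ℕ) [hp : Fact p.Prime]
    (m : ℕ) : m.centralBinom ≡ (m % p).centralBinom * (m / p).centralBinom [MOD p] := by
  have lucas : (2 * m).choose m ≡ (2 * m % p).choose (m % p) * (2 * m / p).choose (m / p) [MOD p] :=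
    Choose.choose_modEq_choose_mod_mul_choose_div_nat
  have digit_lt : m % p < p := Nat.mod_lt m hp.out.pos
  have two_mul_eq : 2 * m = 2 * (m % p) + p * (2 * (m / p)) := by
    linarith [Nat.mod_add_div m p]
  rw [Nat.centralBinom_eq_two_mul_choose]
  rcases lt_or_ge (2 * (m % p)) p with no_carry | carry
  · have mod_eq : 2 * m % p = 2 * (m % p) := by
      rw [two_mul_eq, Nat.add_mul_mod_self_left, Nat.mod_eq_of_lt no_carry]
    have div_eq : 2 * m / p = 2 * (m / p) := by
      rw [two_mul_eq, Nat.add_mul_div_left _ _ hp.out.pos, Nat.div_eq_of_lt no_carry, zero_add]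
    rwa [mod_eq, div_eq] at lucas
  -- The carry makes both sides vanish modulo `p`.
  · have mod_lt : 2 * m % p < m % p := by
      rw [two_mul_eq, Nat.add_mul_mod_self_left, Nat.mod_eq_sub_mod carry,
        Nat.mod_eq_of_lt (by omega)]
      omega
    have dvd_centralBinom : p ∣ (m % p).centralBinom := by
      rw [Nat.centralBinom_eq_two_mul_choose, two_mul]
      exact hp.out.dvd_choose_add digit_lt digit_lt (by rwa [← two_mul])
    rw [Nat.choose_eq_zero_of_lt mod_lt, zero_mul] at lucas
    exact lucas.trans (dvd_centralBinom.mul_right _).modEq_zero_nat.symm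

theorem pow_mul_centralBinom_mem {p : ℕ} [hp : Fact p.Prime] {S : Submonoid (ZMod p)} {a : ZMod p}
    (digits_mem : ∀ d < p, a ^ d * (d.centralBinom : ZMod p) ∈ S) (m : ℕ) :
    a ^ m * (m.centralBinom : ZMod p) ∈ S := by
  induction m using Nat.strongRecOn with
  | ind m ih =>
    rcases m.eq_zero_or_pos with rfl | m_pos
    · exact digits_mem 0 hp.out.pos
    have centralBinom_eq : (m.centralBinom : ZMod p) =
        (m % p).centralBinom * (m / p).centralBinom := by
      exact_mod_cast (ZMod.natCast_eq_natCast_iff _ _ _).mpr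
        (centralBinom_modEq_centralBinom_mod_mul_centralBinom_div p m)
    have pow_eq : a ^ m = a ^ (m % p) * a ^ (m / p) := by
      conv_lhs => rw [← Nat.mod_add_div m p, pow_add, pow_mul, ZMod.pow_card]
    rw [centralBinom_eq, pow_eq, mul_mul_mul_comm]
    exact S.mul_mem (digits_mem _ (Nat.mod_lt m hp.out.pos))
      (ih _ (Nat.div_lt_self m_pos hp.out.one_lt))

theorem centralBinom_succ_eq_two_mul_choose (m : ℕ) :
    (m + 1).centralBinom = 2 * (2 * m + 1).choose m := by
  rw [Nat.centralBinom_eq_two_mul_choose, mul_add_one, Nat.choose_succ_succ',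
    Nat.choose_symm_half, two_mul ((2 * m + 1).choose m)]

theorem isSquare_of_isSquare_even_pow_mul {G : Type*} [CommGroupWithZero G] {a b : G} {k : ℕ}
    (ha : a ≠ 0) (hk : Even k) (h : IsSquare (a ^ k * b)) : IsSquare b := by
  simpa only [mul_div_cancel_left₀ b (pow_ne_zero k ha)] using h.div (hk.isSquare_pow a)

instance fact_prime_five : Fact (Nat.Prime 5) := ⟨Nat.prime_five⟩

theorem isSquare_two_pow_mul_centralBinom (m : ℕ) :
    IsSquare ((2 : ZMod 5) ^ m * (m.centralBinom : ZMod 5)) := by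
  have digits_isSquare : ∀ d < 5, IsSquare ((2 : ZMod 5) ^ d * (d.centralBinom : ZMod 5)) := by
    decide
  exact Submonoid.mem_square.mp
    (pow_mul_centralBinom_mem (fun d hd ↦ Submonoid.mem_square.mpr (digits_isSquare d hd)) m)

theorem isSquare_choose_four_mul (n : ℕ) : IsSquare ((4 * n).choose (2 * n) : ZMod 5) := by
  have h := isSquare_two_pow_mul_centralBinom (2 * n)
  rw [Nat.centralBinom_eq_two_mul_choose, ← mul_assoc] at h
  exact isSquare_of_isSquare_even_pow_mul (by decide) (even_two_mul n) h

theorem isSquare_choose_four_mul_add_one (n : ℕ) :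
    IsSquare ((4 * n + 1).choose (2 * n) : ZMod 5) := by
  have h := isSquare_two_pow_mul_centralBinom (2 * n + 1)
  rw [centralBinom_succ_eq_two_mul_choose, ← mul_assoc, Nat.cast_mul, ← mul_assoc, Nat.cast_two,
    ← pow_succ] at h
  exact isSquare_of_isSquare_even_pow_mul (by decide) ⟨n + 1, by ring⟩ h

theorem mod_five_eq_of_isSquare {k : ℕ} (hk : IsSquare (k : ZMod 5)) :
    k % 5 = 0 ∨ k % 5 = 1 ∨ k % 5 = 4 := by
  have val_of_isSquare : ∀ x : ZMod 5, IsSquare x → x.val = 0 ∨ x.val = 1 ∨ x.val = 4 := by decide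
  simpa only [ZMod.val_natCast] using val_of_isSquare k hk

/-- For every positive integer `n` and every pair `(α, β) ∈ {(0,0), (1,0), (1,1)}`,
the binomial coefficient `C(4n+α, 2n+β)` is congruent to `0`, `1`, or `4` modulo `5`. -/
theorem stmt_10 (n : ℕ) (hn : 0 < n) (α β : ℕ)
    (hαβ : (α, β) = (0, 0) ∨ (α, β) = (1, 0) ∨ (α, β) = (1, 1)) :
    Nat.choose (4 * n + α) (2 * n + β) % 5 = 0 ∨
    Nat.choose (4 * n + α) (2 * n + β) % 5 = 1 ∨
    Nat.choose (4 * n + α) (2 * n + β) % 5 = 4 := by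
  apply mod_five_eq_of_isSquare
  simp only [Prod.mk.injEq] at hαβ
  rcases hαβ with ⟨rfl, rfl⟩ | ⟨rfl, rfl⟩ | ⟨rfl, rfl⟩
  · exact isSquare_choose_four_mul n
  · exact isSquare_choose_four_mul_add_one n
  · have choose_symm : (4 * n + 1).choose (2 * n + 1) = (4 * n + 1).choose (2 * n) :=
      Nat.choose_symm_of_eq_add (by ring)
    rw [choose_symm]
    exact isSquare_choose_four_mul_add_one n
end

section
/- For every positive integer n and every pair (α, β) ∈ {(2,1), (3,1), (3,2)}, the binomial coefficient C(4n+α, 2n+β) is congruent to 0, 2, or 3 modulo 5. -/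
/-! Modulo `5`, the value `x = C(2m, m)` satisfies `x ^ 3 = (-1) ^ m * x`, that is, `x = 0` or
`x ^ 2 = (-1) ^ m`. By Lucas's theorem `C(2m, m)` is, modulo a prime, the product of the values
`C(2r, r)` over the digits `r` of `m`; the identity is multiplicative, and `m` has the same parity
as the sum of its base `5` digits, so only the five digits have to be checked.

For odd `m` the solutions are `0, 2, 3`. For even `m > 0`, writing `x = 2 * y` with
`y = C(2m - 1, m)` turns `x ^ 3 = x` into `y ^ 3 = -y`, since `2 ^ 2 = -1`. -/

theorem prime_dvd_add_choose_of_le_mod_add_mod {p a b : ℕ} (hp : p.Prime)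
    (hcarry : p ≤ a % p + b % p) : p ∣ (a + b).choose a := by
  have : Fact p.Prime := ⟨hp⟩
  have hdigit : (a + b) % p < a % p := by
    have := Nat.add_mod_add_of_le_add_mod hcarry
    have := Nat.mod_lt b hp.pos
    omega
  rw [← Nat.modEq_zero_iff_dvd]
  simpa [Nat.choose_eq_zero_of_lt hdigit] using
    Choose.choose_modEq_choose_mod_mul_choose_div_nat (p := p) (n := a + b) (k := a)

theorem add_choose_modEq_mod_mul_div {p : ℕ} (hp : p.Prime) (a b : ℕ) :
    (a + b).choose a ≡
      (a % p + b % p).choose (a % p) * (a / p + b / p).choose (a / p) [MOD p] := by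
  have : Fact p.Prime := ⟨hp⟩
  rcases lt_or_ge (a % p + b % p) p with hno_carry | hcarry
  · simpa only [Nat.add_mod_of_add_mod_lt hno_carry, Nat.add_div_eq_of_add_mod_lt hno_carry] using
      Choose.choose_modEq_choose_mod_mul_choose_div_nat (p := p) (n := a + b) (k := a)
  · have hdvd := prime_dvd_add_choose_of_le_mod_add_mod hp hcarry
    have hdvd_digits : p ∣ (a % p + b % p).choose (a % p) :=
      prime_dvd_add_choose_of_le_mod_add_mod hp (by simpa only [Nat.mod_mod] using hcarry)
    exact (Nat.modEq_zero_iff_dvd.mpr hdvd).trans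
      (Nat.modEq_zero_iff_dvd.mpr (hdvd_digits.mul_right _)).symm

theorem centralBinom_modEq_mod_mul_div {p : ℕ} (hp : p.Prime) (m : ℕ) :
    m.centralBinom ≡ (m % p).centralBinom * (m / p).centralBinom [MOD p] := by
  simpa only [Nat.centralBinom_eq_two_mul_choose, two_mul] using
    add_choose_modEq_mod_mul_div hp m m

theorem centralBinom_cube_zmod_five_of_lt {r : ℕ} (hr : r < 5) :
    (r.centralBinom : ZMod 5) ^ 3 = (-1) ^ r * r.centralBinom := by
  interval_cases r <;> decide

theorem centralBinom_cube_zmod_five (m : ℕ) :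
    (m.centralBinom : ZMod 5) ^ 3 = (-1) ^ m * m.centralBinom := by
  induction m using Nat.strong_induction_on with
  | _ m ih =>
    rcases lt_or_ge m 5 with hm | hm
    · exact centralBinom_cube_zmod_five_of_lt hm
    have hlucas : (m.centralBinom : ZMod 5) = (m % 5).centralBinom * (m / 5).centralBinom := by
      exact_mod_cast (ZMod.natCast_eq_natCast_iff _ _ 5).mpr
        (centralBinom_modEq_mod_mul_div Nat.prime_five m)
    have hsign : (-1 : ZMod 5) ^ m = (-1) ^ (m % 5) * (-1) ^ (m / 5) := by
      conv_lhs => rw [← Nat.mod_add_div m 5, pow_add, pow_mul, (show Odd 5 by decide).neg_one_pow]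
    rw [hlucas, hsign, mul_pow, centralBinom_cube_zmod_five_of_lt (Nat.mod_lt m (by norm_num)),
      ih (m / 5) (by omega), mul_mul_mul_comm]

theorem two_mul_add_one_choose_cube_zmod_five (m : ℕ) :
    ((2 * m + 1).choose m : ZMod 5) ^ 3 = (-1) ^ m * (2 * m + 1).choose m := by
  have hcube := centralBinom_cube_zmod_five (m + 1)
  rw [centralBinom_succ_eq_two_mul_choose, Nat.cast_mul, Nat.cast_ofNat] at hcube
  have hfive : (5 : ZMod 5) = 0 := rfl
  linear_combination 2 * hcube - (3 * ((2 * m + 1).choose m : ZMod 5) ^ 3 +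
    (-1) ^ m * (2 * m + 1).choose m) * hfive

theorem mod_five_of_cube_eq_neg {x : ℕ} (hx : (x : ZMod 5) ^ 3 = -x) :
    x % 5 = 0 ∨ x % 5 = 2 ∨ x % 5 = 3 := by
  have hroots : ∀ y : ZMod 5, y ^ 3 = -y → y.val = 0 ∨ y.val = 2 ∨ y.val = 3 := by decide
  simpa only [ZMod.val_natCast] using hroots x hx

/-- For every positive integer `n` and every pair `(α, β) ∈ {(2,1), (3,1), (3,2)}`,
the binomial coefficient `C(4n+α, 2n+β)` is congruent to `0`, `2`, or `3` modulo `5`. -/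
theorem stmt_11 (n : ℕ) (hn : 0 < n) (α β : ℕ)
    (hαβ : (α, β) = (2, 1) ∨ (α, β) = (3, 1) ∨ (α, β) = (3, 2)) :
    Nat.choose (4 * n + α) (2 * n + β) % 5 = 0 ∨
    Nat.choose (4 * n + α) (2 * n + β) % 5 = 2 ∨
    Nat.choose (4 * n + α) (2 * n + β) % 5 = 3 := by
  have hsign : (-1 : ZMod 5) ^ (2 * n + 1) = -1 := (odd_two_mul_add_one n).neg_one_pow
  have hcentral := centralBinom_cube_zmod_five (2 * n + 1)
  have hnear := two_mul_add_one_choose_cube_zmod_five (2 * n + 1)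
  have hsymm := Nat.choose_symm_half (2 * n + 1)
  rw [hsign, neg_one_mul] at hcentral hnear
  rw [Nat.centralBinom_eq_two_mul_choose, show 2 * (2 * n + 1) = 4 * n + 2 by ring] at hcentral
  rw [show 2 * (2 * n + 1) + 1 = 4 * n + 3 by ring] at hnear hsymm
  simp only [Prod.mk.injEq] at hαβ
  rcases hαβ with ⟨rfl, rfl⟩ | ⟨rfl, rfl⟩ | ⟨rfl, rfl⟩
  · exact mod_five_of_cube_eq_neg hcentral
  · exact mod_five_of_cube_eq_neg hnear
  · exact hsymm ▸ mod_five_of_cube_eq_neg hnear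
end

section
/- Let a > b be positive integers, let α and β be integers, let d = gcd(a,b), c = a/d, and let p be a prime with p > a + 2b, and set e = gcd(p−1, a). If e < c or ν₂(a) ≤ ν₂(p−1), then for every integer r with 0 ≤ r ≤ p−1 there exist infinitely many positive integers n (with an+α ≥ 0 and bn+β ≥ 0) such that C(an+α, bn+β) ≡ r (mod p). -/
/-!
Write `b = b₀ * d` and `a = (b₀ + c) * d` with `b₀`, `c` coprime. By Lucas' theorem binomial
coefficients multiply when base-`p` expansions are concatenated, so the nonzero residues of
`C(a * n, b * n)` form a subgroup `H` of the units modulo `p`, and the class modulo `H` of a nonzero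
`C((b₀ + c) * n, b₀ * n)` depends only on `n` modulo `d`. The quotient map `F` by `H`, extended by
`0 ↦ 0`, therefore takes the value `F (C(b₀ + c, b₀)) ^ n` there.

Build a solution of `c * M = b₀ * R` digit by digit, and normalise `F (C(R + M, M))` by a power of
`F (C(b₀ + c, b₀))`. Two initial parts with the same carry have the same completions, hence the
same normalised value. Comparing the digits `r, t` after the carry `E - b₀` with `r + 1, t` after
`E` gives `F u = F v` whenever `(b₀ + c) * v = c * u + E`, with `0 < v ≤ u` as residues and
`0 < E < c`. If `b₀ < c`, the cases `E = 1` and `E = c - 1` show that for each `w ≠ 0` one of two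
affine functions of `w` lies in the kernel of `F`. The kernel then contains more than half of the
residues, which makes `F` trivial and `H` everything. The case `c < b₀` is symmetric. In the
remaining case `b₀ = c = 1` of central binomial coefficients, the recurrence gives
`F (2 * m + 1) = F (m + 1)`. Here `F 2 = 1` is clear for `d = 1`, as `C(2, 1) = 2`. For `d ≥ 2` it
follows from `9 = 3 * 3` unless `p = 5`, and `C(4 * n, 2 * n)` takes only the values `0` and `±1`
modulo `5`.

Finally, if `C(a * n + α, b * n + β)` is not divisible by `p`, replacing `n` by `n + p ^ k * m`
with `k` large multiplies its residue by that of `C(a * m, b * m)`, which can be prescribed.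
-/

section Residues

/-- The binomial coefficient `C(R + M, M)` modulo `p`. The numbers `R = N - M` and `M` are used as
coordinates instead of `N` and `M` because they play symmetric roles. -/
def binomMod (p R M : ℕ) : ZMod p := ((R + M).choose M : ℕ)

theorem binomMod_comm (p R M : ℕ) : binomMod p R M = binomMod p M R := by
  rw [binomMod, binomMod, ← Nat.choose_symm_add, Nat.add_comm]

theorem binomMod_zero_zero (p : ℕ) : binomMod p 0 0 = 1 := by
  simp [binomMod]

theorem binomMod_one_one (p : ℕ) : binomMod p 1 1 = 2 := by
  simp [binomMod]

theorem binomMod_one_left (p T : ℕ) : binomMod p 1 T = (T + 1 : ℕ) := by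
  rw [binomMod, Nat.add_comm, Nat.choose_succ_self_right]

theorem binomMod_succ_left_mul (p R M : ℕ) :
    binomMod p (R + 1) M * (R + 1 : ℕ) = binomMod p R M * (R + 1 + M : ℕ) := by
  have h := Nat.choose_mul_succ_eq (R + M) M
  rw [show R + M + 1 - M = R + 1 by lia] at h
  rw [binomMod, binomMod, show R + 1 + M = R + M + 1 by lia, ← Nat.cast_mul, ← Nat.cast_mul, h]

variable (p : ℕ) [Fact p.Prime]

theorem choose_add_pow_mul {k N M : ℕ} (hN : N < p ^ k) (hM : M < p ^ k) (s t : ℕ) :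
    ((N + p ^ k * s).choose (M + p ^ k * t) : ZMod p) = N.choose M * s.choose t := by
  have lucas (n m : ℕ) :
      (n.choose m : ZMod p) = (n % p).choose (m % p) * (n / p).choose (m / p) :=
    mod_cast (ZMod.natCast_eq_natCast_iff _ _ p).2 Choose.choose_modEq_choose_mod_mul_choose_div_nat
  have hp : 0 < p := NeZero.pos p
  induction k generalizing N M with
  | zero => simp [Nat.lt_one_iff.1 (pow_zero p ▸ hN), Nat.lt_one_iff.1 (pow_zero p ▸ hM)]
  | succ k ih =>
    have div_lt {x : ℕ} (hx : x < p ^ (k + 1)) : x / p < p ^ k :=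
      Nat.div_lt_of_lt_mul (by rwa [← pow_succ'])
    rw [lucas, lucas N, pow_succ', mul_assoc, mul_assoc, Nat.add_mul_mod_self_left,
      Nat.add_mul_mod_self_left, Nat.add_mul_div_left _ _ hp, Nat.add_mul_div_left _ _ hp,
      ih (div_lt hN) (div_lt hM), mul_assoc]

variable {p}

theorem binomMod_add_pow_mul {k R M : ℕ} (h : R + M < p ^ k) (r t : ℕ) :
    binomMod p (R + p ^ k * r) (M + p ^ k * t) = binomMod p R M * binomMod p r t := by
  rw [binomMod, add_add_add_comm, ← mul_add,
    choose_add_pow_mul p h ((Nat.le_add_left M R).trans_lt h), binomMod, binomMod]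

theorem natCast_ne_zero_of_pos_of_lt {n : ℕ} (h₀ : 0 < n) (h : n < p) : (n : ZMod p) ≠ 0 := by
  rw [Ne, ZMod.natCast_eq_zero_iff]
  exact Nat.not_dvd_of_pos_of_lt h₀ h

theorem choose_ne_zero_of_lt {n m : ℕ} (hmn : m ≤ n) (hn : n < p) : (n.choose m : ZMod p) ≠ 0 := by
  have hp : p.Prime := Fact.out
  rw [Ne, ZMod.natCast_eq_zero_iff, ← hp.coprime_iff_not_dvd]
  exact hp.coprime_choose_of_lt hn hmn

theorem binomMod_ne_zero {R M : ℕ} (h : R + M < p) : binomMod p R M ≠ 0 :=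
  choose_ne_zero_of_lt (Nat.le_add_left M R) h

theorem eq_five_or_eq_seven_or_eleven_le {p : ℕ} (hp : p.Prime) (h : 3 < p) :
    p = 5 ∨ p = 7 ∨ 11 ≤ p := by
  by_contra! hne
  have hp₁₁ : p < 11 := hne.2.2
  interval_cases p <;> simp_all +decide

theorem exists_lt_pow_dvd_pow_sub_one {q m : ℕ} (hq : 1 < q) (hm : 0 < m) (hqm : q.Coprime m)
    (W : ℕ) : ∃ k, W < q ^ k ∧ (m : ℤ) ∣ q ^ k - 1 := by
  refine ⟨m.totient * W, (Nat.lt_pow_self hq).trans_le ?_, ?_⟩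
  · exact Nat.pow_le_pow_right hq.le (Nat.le_mul_of_pos_left W (Nat.totient_pos.2 hm))
  · have h : 1 ≡ q ^ (m.totient * W) [MOD m] := by
      simpa [pow_mul] using ((Nat.ModEq.pow_totient hqm).pow W).symm
    simpa using Nat.modEq_iff_dvd.1 h

end Residues

section Carries

variable {p b c k l R M R' M' : ℕ} {D D' : ℤ}

/-- The pair `R, M` is an initial part, of `k` base-`p` digits, of a solution of `c * M = b * R`:
the equation holds modulo `p ^ k`, and `D` is carried to the digits that follow. The digits of `R`
and `M` are required to add without carries, in the sense that `C(R + M, M)` is nonzero modulo `p`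
and `R + M` has `k` digits too. -/
structure IsCarry (p b c k R M : ℕ) (D : ℤ) : Prop where
  lt : R + M < p ^ k
  eq : (c : ℤ) * M - b * R = p ^ k * D
  ne_zero : binomMod p R M ≠ 0

namespace IsCarry

theorem zero (p b c : ℕ) [Fact p.Prime] : IsCarry p b c 0 0 0 0 :=
  ⟨by simp, by simp, by simp [binomMod_zero_zero]⟩

theorem symm (h : IsCarry p b c k R M D) : IsCarry p c b k M R (-D) :=
  ⟨by have := h.lt; lia, by linear_combination -h.eq, binomMod_comm p R M ▸ h.ne_zero⟩

theorem lt_right (h : IsCarry p b c k R M D) (hc : 0 < c) : D < c := by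
  have hM : (M : ℤ) < p ^ k := mod_cast (Nat.le_add_left M R).trans_lt h.lt
  have hle : (p : ℤ) ^ k * D ≤ c * M := by nlinarith [h.eq]
  have hlt : (p : ℤ) ^ k * D < p ^ k * c := by
    rw [mul_comm _ (c : ℤ)]
    exact hle.trans_lt (mul_lt_mul_of_pos_left hM (mod_cast hc))
  exact lt_of_mul_lt_mul_left hlt (by positivity)

theorem neg_lt (h : IsCarry p b c k R M D) (hb : 0 < b) : -(b : ℤ) < D := by
  have := h.symm.lt_right hb
  lia

variable [Fact p.Prime]

theorem append (h : IsCarry p b c k R M D) (hlt : R' + M' < p ^ l)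
    (heq : D + c * M' - b * R' = p ^ l * D') (hne : binomMod p R' M' ≠ 0) :
    IsCarry p b c (k + l) (R + p ^ k * R') (M + p ^ k * M') D' where
  lt := by
    have := h.lt
    have := Nat.mul_le_mul_left (p ^ k) (Nat.succ_le_of_lt hlt)
    rw [pow_add]
    lia
  eq := by
    push_cast
    rw [pow_add]
    linear_combination h.eq + (p : ℤ) ^ k * heq
  ne_zero := by
    rw [binomMod_add_pow_mul h.lt]
    exact mul_ne_zero h.ne_zero hne

end IsCarry

theorem exists_lt_dvd_sub_mul (hc : 0 < c) (hbc : b.Coprime c) (x : ℤ) :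
    ∃ j : ℕ, j < c ∧ (c : ℤ) ∣ x - b * j := by
  obtain ⟨u, v, huv⟩ := Nat.isCoprime_iff_coprime.2 hbc
  have hc' : (0 : ℤ) < c := mod_cast hc
  have hpos := Int.emod_nonneg (u * x) hc'.ne'
  refine ⟨(u * x % c).toNat, by have := Int.emod_lt_of_pos (u * x) hc'; lia, ?_⟩
  rw [Int.toNat_of_nonneg hpos]
  obtain ⟨q, hq⟩ := Int.dvd_self_sub_emod (x := u * x) (m := c)
  exact ⟨v * x + b * q, by linear_combination b * hq - x * huv⟩

variable [Fact p.Prime]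

theorem IsCarry.exists_of_emod_add {E : ℤ} (h : IsCarry p b c k R M E) (hE : E = (D + b) % c)
    (hb : 0 < b) (hc : 0 < c) (hlt : b + c < p) (hD₀ : 0 < D) (hD : D < c) :
    ∃ k R M, IsCarry p b c k R M D := by
  have hp : p.Prime := Fact.out
  have hc' : (0 : ℤ) < c := mod_cast hc
  have hE₀ : 0 ≤ E := hE ▸ Int.emod_nonneg _ hc'.ne'
  have hEc : E < c := hE ▸ Int.emod_lt_of_pos _ hc'
  obtain ⟨l, hl, hdvd⟩ := exists_lt_pow_dvd_pow_sub_one hp.one_lt hc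
    (Nat.coprime_of_lt_prime hc.ne' (by lia) hp) (b + c)
  have hl' : (b + c : ℤ) < p ^ l := mod_cast hl
  obtain ⟨T, hT⟩ : (c : ℤ) ∣ p ^ l * D + b - E := by
    have := (hdvd.mul_right D).add (hE ▸ Int.dvd_self_sub_emod (x := D + b) (m := c))
    rwa [show ((p : ℤ) ^ l - 1) * D + (D + b - E) = p ^ l * D + b - E by ring] at this
  have hT₀ : 0 ≤ T := by
    by_contra! hneg
    nlinarith
  lift T to ℕ using hT₀
  have hTlt : (1 + T : ℤ) < p ^ l := by
    by_contra! hge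
    nlinarith
  refine ⟨k + l, _, _, h.append (R' := 1) (M' := T) (mod_cast hTlt) ?_ ?_⟩
  · push_cast
    linear_combination -hT
  · -- Modulo `p`, the number `c * (T + 1)` is `b + c - E`.
    have hm : ((b + c - E).toNat : ZMod p) ≠ 0 :=
      natCast_ne_zero_of_pos_of_lt (by lia) (by lia)
    have hl₀ : l ≠ 0 := by
      rintro rfl
      lia
    rw [binomMod_one_left]
    contrapose hm
    have hT' := congrArg (Int.cast (R := ZMod p)) hT
    rw [← Int.cast_natCast, Int.toNat_of_nonneg (by lia)]
    push_cast [CharP.cast_eq_zero, zero_pow hl₀] at hm hT' ⊢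
    linear_combination hT' + c * hm

theorem exists_isCarry_of_nonneg (hb : 0 < b) (hc : 0 < c) (hbc : b.Coprime c) (hlt : b + c < p)
    (hD₀ : 0 ≤ D) (hD : D < c) : ∃ k R M, IsCarry p b c k R M D := by
  -- Iterating `D ↦ (D + b) % c` reaches `0` after `j` steps.
  obtain ⟨j, -, hj⟩ := exists_lt_dvd_sub_mul hc hbc (-D)
  have hc' : (0 : ℤ) < c := mod_cast hc
  induction j generalizing D with
  | zero =>
    obtain rfl : D = 0 := Int.eq_zero_of_dvd_of_nonneg_of_lt hD₀ hD (by simpa using hj)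
    exact ⟨0, 0, 0, .zero p b c⟩
  | succ j ih =>
    obtain rfl | hpos := hD₀.eq_or_lt
    · exact ⟨0, 0, 0, .zero p b c⟩
    · obtain ⟨_, _, _, h⟩ := ih (D := (D + b) % c) (Int.emod_nonneg _ hc'.ne')
        (Int.emod_lt_of_pos _ hc') (by
          convert Int.dvd_add hj (Int.dvd_self_sub_emod (x := D + b) (m := c)) using 1
          push_cast
          ring)
      exact h.exists_of_emod_add rfl hb hc hlt hpos hD

theorem exists_isCarry (hb : 0 < b) (hc : 0 < c) (hbc : b.Coprime c) (hlt : b + c < p)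
    (hbD : -(b : ℤ) < D) (hDc : D < c) : ∃ k R M, IsCarry p b c k R M D := by
  obtain hD | hD := le_total 0 D
  · exact exists_isCarry_of_nonneg hb hc hbc hlt hD hDc
  · obtain ⟨k, M, R, h⟩ := exists_isCarry_of_nonneg (p := p) (D := -D) hc hb hbc.symm
      (by lia) (by lia) (by lia)
    exact ⟨k, R, M, neg_neg D ▸ h.symm⟩

theorem exists_tail (hb : 0 < b) (hc : 0 < c) (hbc : b.Coprime c) (hbD : -(b : ℤ) < D)
    (hDc : D < c) : ∃ R M : ℕ, R + M < b + c ∧ D + c * M - b * R = 0 := by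
  obtain ⟨R, hR, M, hM⟩ := exists_lt_dvd_sub_mul hc hbc D
  have hM₀ : M ≤ 0 := by
    by_contra! hpos
    nlinarith
  have hMb : -M < b := by
    by_contra! hge
    nlinarith
  exact ⟨R, (-M).toNat, by lia, by rw [Int.toNat_of_nonneg (by lia)]; linear_combination hM⟩

end Carries

section Weights

variable {G₀ : Type*} [CommGroupWithZero G₀] {p : ℕ} (b c : ℕ) (F : ZMod p →*₀ G₀)

/-- `F` takes the values `F (C((b + c) * n, b * n)) = F (C(b + c, b)) ^ n` on the ray spanned by
`(b + c, b)`, wherever the binomial coefficient does not vanish modulo `p`. -/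
def IsGeometricOnRay : Prop :=
  ∀ n, binomMod p (c * n) (b * n) ≠ 0 → F (binomMod p (c * n) (b * n)) = F (binomMod p c b) ^ n

/-- The value `F (C(R + M, M))`, normalised by a power of `F (C(b + c, b))` so as to equal `1` on
the ray spanned by `(b + c, b)`. The exponent is the linear form in `R`, `M` that takes the
value `n` at `R = c * n`, `M = b * n`, when `b` and `c` are coprime. -/
def weight (R M : ℕ) : G₀ :=
  F (binomMod p R M) / F (binomMod p c b) ^ (c.gcdA b * R + c.gcdB b * M)

variable {b c F} {k l R M R' M' : ℕ} {D : ℤ}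

theorem IsGeometricOnRay.symm (h : IsGeometricOnRay b c F) : IsGeometricOnRay c b F := by
  intro n hn
  rw [binomMod_comm p (b * n)] at hn ⊢
  rw [binomMod_comm p b]
  exact h n hn

variable [Fact p.Prime]

theorem weight_eq_one (hb : 0 < b) (hbc : b.Coprime c) (hF : IsGeometricOnRay b c F)
    (hω : binomMod p c b ≠ 0) (hne : binomMod p R M ≠ 0) (heq : c * M = b * R) :
    weight b c F R M = 1 := by
  obtain ⟨n, rfl⟩ : b ∣ M := hbc.dvd_of_dvd_mul_left ⟨R, heq⟩
  obtain rfl : R = c * n := by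
    have : b * R = b * (c * n) := by lia
    exact Nat.eq_of_mul_eq_mul_left hb this
  have hbezout : c.gcdA b * (c * n : ℕ) + c.gcdB b * (b * n : ℕ) = n := by
    have := Nat.gcd_eq_gcd_ab c b
    rw [hbc.symm.gcd_eq_one] at this
    push_cast at this ⊢
    linear_combination -(n : ℤ) * this
  rw [weight, hbezout, hF n hne, zpow_natCast, div_self (pow_ne_zero n ((map_ne_zero F).2 hω))]

theorem map_zpow_pow_mul (x : ZMod p) (k : ℕ) (z : ℤ) : F x ^ ((p : ℤ) ^ k * z) = F x ^ z := by
  rw [zpow_mul, ← Nat.cast_pow, zpow_natCast, ← map_pow, ZMod.pow_card_pow]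

theorem weight_append (hω : binomMod p c b ≠ 0) (h : R + M < p ^ k) :
    weight b c F (R + p ^ k * R') (M + p ^ k * M') = weight b c F R M * weight b c F R' M' := by
  have hω' : F (binomMod p c b) ≠ 0 := (map_ne_zero F).2 hω
  have hexp : c.gcdA b * (R + p ^ k * R' : ℕ) + c.gcdB b * (M + p ^ k * M' : ℕ) =
      c.gcdA b * R + c.gcdB b * M + (p : ℤ) ^ k * (c.gcdA b * R' + c.gcdB b * M') := by
    push_cast
    ring
  rw [weight, weight, weight, hexp, zpow_add₀ hω', map_zpow_pow_mul, binomMod_add_pow_mul h,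
    map_mul, mul_div_mul_comm]

theorem IsCarry.weight_eq (hb : 0 < b) (hc : 0 < c) (hbc : b.Coprime c) (hlt : b + c < p)
    (hF : IsGeometricOnRay b c F) (h : IsCarry p b c k R M D) (h' : IsCarry p b c l R' M' D) :
    weight b c F R M = weight b c F R' M' := by
  have hω : binomMod p c b ≠ 0 := binomMod_ne_zero (by lia)
  obtain ⟨S, T, hST, heq⟩ := exists_tail hb hc hbc (h.neg_lt hb) (h.lt_right hc)
  have closes {k R M : ℕ} (h : IsCarry p b c k R M D) :
      weight b c F R M * weight b c F S T = 1 := by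
    have hdone : IsCarry p b c (k + 1) (R + p ^ k * S) (M + p ^ k * T) 0 :=
      h.append (by lia) (by lia) (binomMod_ne_zero (by lia))
    rw [← weight_append hω h.lt]
    exact weight_eq_one hb hbc hF hω hdone.ne_zero
      (by exact_mod_cast sub_eq_zero.1 (hdone.eq.trans (mul_zero _)))
  exact mul_right_cancel₀ (right_ne_zero_of_mul_eq_one (closes h))
    ((closes h).trans (closes h').symm)

theorem weight_succ_left_mul (hω : binomMod p c b ≠ 0) (R M : ℕ) :
    weight b c F (R + 1) M * F (R + 1 : ℕ) * F (binomMod p c b) ^ c.gcdA b =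
      weight b c F R M * F (R + 1 + M : ℕ) := by
  have hω' : F (binomMod p c b) ≠ 0 := (map_ne_zero F).2 hω
  have hexp : c.gcdA b * (R + 1 : ℕ) + c.gcdB b * M = c.gcdA b * R + c.gcdB b * M + c.gcdA b := by
    push_cast
    ring
  have hF := congrArg F (binomMod_succ_left_mul p R M)
  rw [map_mul, map_mul] at hF
  rw [weight, weight, hexp, zpow_add₀ hω', div_mul_eq_mul_div, hF, div_mul_eq_mul_div,
    mul_div_mul_right _ _ (zpow_ne_zero _ hω'), div_mul_eq_mul_div]

theorem weight_ne_zero (hω : binomMod p c b ≠ 0) (hne : binomMod p R M ≠ 0) :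
    weight b c F R M ≠ 0 :=
  div_ne_zero ((map_ne_zero F).2 hne) (zpow_ne_zero _ ((map_ne_zero F).2 hω))

theorem IsCarry.map_mul_weight {k₁ R₁ M₁ k₂ R₂ M₂ r t : ℕ} (hb : 0 < b) (hc : 0 < c)
    (hbc : b.Coprime c) (hlt : b + c < p) (hF : IsGeometricOnRay b c F)
    (h₁ : IsCarry p b c k₁ R₁ M₁ (D - b)) (h₂ : IsCarry p b c k₂ R₂ M₂ D) (hrt : r + 1 + t < p)
    (hdvd : (p : ℤ) ∣ D + c * t - b * (r + 1 : ℕ)) :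
    F (r + 1 + t : ℕ) * weight b c F R₂ M₂ =
      weight b c F R₁ M₁ * F (binomMod p c b) ^ c.gcdA b * F (r + 1 : ℕ) := by
  have hω : binomMod p c b ≠ 0 := binomMod_ne_zero (by lia)
  obtain ⟨D', hD'⟩ := hdvd
  -- The digits `r, t` after the carry `D - b` and `r + 1, t` after `D` leave the same carry `D'`.
  have h₁' := h₁.append (l := 1) (R' := r) (M' := t) (D' := D') (by lia)
    (by push_cast at hD'; linear_combination hD') (binomMod_ne_zero (by lia))
  have h₂' := h₂.append (l := 1) (D' := D') (by lia) (by rwa [pow_one]) (binomMod_ne_zero hrt)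
  have hweight := h₁'.weight_eq hb hc hbc hlt hF h₂'
  rw [weight_append hω h₁.lt, weight_append hω h₂.lt] at hweight
  have hne : weight b c F r t ≠ 0 := weight_ne_zero hω (binomMod_ne_zero (by lia))
  apply mul_right_cancel₀ hne
  calc F (r + 1 + t : ℕ) * weight b c F R₂ M₂ * weight b c F r t
      = weight b c F R₂ M₂ * (weight b c F r t * F (r + 1 + t : ℕ)) := by ac_rfl
    _ = weight b c F R₂ M₂ * weight b c F (r + 1) t * F (r + 1 : ℕ) *
          F (binomMod p c b) ^ c.gcdA b := by
      rw [← weight_succ_left_mul hω r t]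
      ac_rfl
    _ = weight b c F R₁ M₁ * F (binomMod p c b) ^ c.gcdA b * F (r + 1 : ℕ) *
          weight b c F r t := by
      rw [← hweight]
      ac_rfl

theorem exists_map_eq_mul_map {E : ℕ} (hb : 0 < b) (hbc : b.Coprime c) (hlt : b + c < p)
    (hF : IsGeometricOnRay b c F) (hE₀ : 0 < E) (hE : E < c) :
    ∃ κ, ∀ u v : ZMod p, v ≠ 0 → v.val ≤ u.val → (b + c) * v = c * u + E → F u = κ * F v := by
  have hc : 0 < c := by lia
  have hω : binomMod p c b ≠ 0 := binomMod_ne_zero (by lia)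
  obtain ⟨k₁, R₁, M₁, h₁⟩ := exists_isCarry (D := E - b) hb hc hbc hlt (by lia) (by lia)
  obtain ⟨k₂, R₂, M₂, h₂⟩ := exists_isCarry (D := E) hb hc hbc hlt (by lia) (by lia)
  refine ⟨weight b c F R₁ M₁ * F (binomMod p c b) ^ c.gcdA b / weight b c F R₂ M₂, ?_⟩
  intro u v hv hvu huv
  obtain ⟨r, hr⟩ : ∃ r, v.val = r + 1 := Nat.exists_eq_succ_of_ne_zero (by simpa using hv)
  obtain ⟨t, ht⟩ : ∃ t, u.val = r + 1 + t := Nat.exists_eq_add_of_le (by lia)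
  have hu : u = (r + 1 + t : ℕ) := by rw [← ht, ZMod.natCast_zmod_val]
  have hv : v = (r + 1 : ℕ) := by rw [← hr, ZMod.natCast_zmod_val]
  rw [div_mul_eq_mul_div, eq_div_iff (weight_ne_zero hω h₂.ne_zero), hu, hv]
  refine h₁.map_mul_weight hb hc hbc hlt hF h₂ (ht ▸ u.val_lt) ?_
  rw [← ZMod.intCast_zmod_eq_zero_iff_dvd]
  rw [hu, hv] at huv
  push_cast at huv ⊢
  linear_combination -huv

theorem map_eq_of_add_mul_eq {E : ℕ} (hb : 0 < b) (hbc : b.Coprime c) (hlt : b + c < p)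
    (hF : IsGeometricOnRay b c F) (hE₀ : 0 < E) (hE : E < c) {u v : ZMod p} (hv : v ≠ 0)
    (hvu : v.val ≤ u.val) (huv : (b + c) * v = c * u + E) : F u = F v := by
  obtain ⟨κ, hκ⟩ := exists_map_eq_mul_map (F := F) hb hbc hlt hF hE₀ hE
  have hb' : (b : ZMod p) ≠ 0 := natCast_ne_zero_of_pos_of_lt hb (by lia)
  have hE' : (E : ZMod p) ≠ 0 := natCast_ne_zero_of_pos_of_lt hE₀ (by lia)
  have hx : (E / b : ZMod p) ≠ 0 := div_ne_zero hE' hb'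
  have hκ₁ : κ = 1 := by
    have h := hκ (E / b) (E / b) hx le_rfl (by field_simp; ring)
    exact mul_right_cancel₀ ((map_ne_zero F).2 hx) (h.symm.trans (one_mul _).symm)
  rw [hκ u v hv hvu huv, hκ₁, one_mul]

end Weights

section Field

open scoped Finset

variable {K G₀ : Type*} [Field K] [Finite K] [CommGroupWithZero G₀] {F : K →*₀ G₀}

theorem map_eq_one_of_sub_or_add {a e : K} (he : e ≠ 0) (ha : F a = 1)
    (h : ∀ w ≠ 0, F (a - w) = 1 ∨ F (a + e * w) = 1) {x : K} (hx : x ≠ 0) : F x = 1 := by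
  classical
  have := Fintype.ofFinite K
  let S : Finset K := {y | F y = 1}
  let A : Finset K := {w | F (a - w) = 1}
  let B : Finset K := {w | F (a + e * w) = 1}
  let T : Finset K := {y | F (x * y) = 1}
  have hA : #A = #S := Finset.card_equiv (Equiv.subLeft a) (by simp [A, S])
  have hB : #B = #S :=
    Finset.card_equiv ((Equiv.mulLeft₀ e he).trans (Equiv.addLeft a)) (by simp [B, S])
  have hT : #T = #S := Finset.card_equiv (Equiv.mulLeft₀ x hx) (by simp [T, S])
  have hunion : A ∪ B = Finset.univ := by
    ext w
    obtain rfl | hw := eq_or_ne w 0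
    · simp [A, B, ha]
    · simpa [A, B] using h w hw
  have hinter : 0 < #(A ∩ B) := Finset.card_pos.2 ⟨0, by simp [A, B, ha]⟩
  have hlarge : Fintype.card K < #S + #S := by
    have := Finset.card_union_add_card_inter A B
    rw [hunion, hA, hB, Finset.card_univ] at this
    lia
  obtain ⟨y, hy⟩ : (S ∩ T).Nonempty := by
    apply Finset.inter_nonempty_of_card_lt_card_add_card (Finset.subset_univ _)
      (Finset.subset_univ _)
    rwa [hT, Finset.card_univ]
  obtain ⟨hy₁, hxy⟩ : F y = 1 ∧ F (x * y) = 1 := by simpa [S, T] using hy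
  rwa [map_mul, hy₁, mul_one] at hxy

end Field

section Rays

theorem val_neg_one_sub {p : ℕ} [NeZero p] (u : ZMod p) : (-1 - u).val = p - 1 - u.val := by
  have hu := u.val_lt
  have h : -1 - u = (p - 1 - u.val : ℕ) := by
    rw [Nat.sub_sub, Nat.cast_sub (by lia)]
    push_cast [ZMod.natCast_zmod_val, CharP.cast_eq_zero]
    ring
  rw [h, ZMod.val_natCast_of_lt (by lia)]

theorem val_le_val_neg_one {p : ℕ} [NeZero p] (x : ZMod p) : x.val ≤ (-1 : ZMod p).val := by
  have h := val_neg_one_sub (0 : ZMod p)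
  rw [sub_zero, ZMod.val_zero] at h
  have := x.val_lt
  lia

variable {G₀ : Type*} [CommGroupWithZero G₀] {p : ℕ} [Fact p.Prime] {b c : ℕ} {F : ZMod p →*₀ G₀}

theorem IsGeometricOnRay.map_natCast_eq_map_add {j : ℕ} (hF : IsGeometricOnRay b c F) (hb : 0 < b)
    (hbc : b.Coprime c) (hlt : b + c < p) (hj₀ : 0 < j) (hj : j < c) :
    F (j : ℕ) = F (b + c : ℕ) := by
  have ha : ((b + c : ℕ) : ZMod p) ≠ 0 := natCast_ne_zero_of_pos_of_lt (by lia) hlt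
  have hj' : (j : ZMod p) ≠ 0 := natCast_ne_zero_of_pos_of_lt hj₀ (by lia)
  have h := map_eq_of_add_mul_eq (E := c - j) (u := -1) (v := -j / (b + c : ℕ)) hb hbc hlt hF
    (by lia) (by lia) (div_ne_zero (neg_ne_zero.2 hj') ha) (val_le_val_neg_one _) (by
      rw [Nat.cast_sub hj.le, ← Nat.cast_add, mul_div_cancel₀ _ ha]
      ring)
  rw [neg_div, ← neg_one_mul (_ / _), map_mul, map_div₀] at h
  rw [← div_eq_one_iff_eq ((map_ne_zero F).2 ha)]
  exact (left_eq_mul₀ ((map_ne_zero F).2 (neg_ne_zero.2 one_ne_zero))).1 h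

theorem IsGeometricOnRay.map_natCast_eq_one {j : ℕ} (hF : IsGeometricOnRay b c F) (hb : 0 < b)
    (hbc : b.Coprime c) (hlt : b + c < p) (hj₀ : 0 < j) (hj : j < c) : F (j : ℕ) = 1 := by
  rw [hF.map_natCast_eq_map_add hb hbc hlt hj₀ hj,
    ← hF.map_natCast_eq_map_add hb hbc hlt one_pos (by lia), Nat.cast_one, map_one]

theorem IsGeometricOnRay.map_add_eq_one (hF : IsGeometricOnRay b c F) (hb : 0 < b)
    (hbc : b.Coprime c) (hlt : b + c < p) (hc : 1 < c) : F (b + c : ℕ) = 1 := by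
  rw [← hF.map_natCast_eq_map_add hb hbc hlt one_pos hc, Nat.cast_one, map_one]

theorem IsGeometricOnRay.map_natCast_eq_map_right {j : ℕ} (hF : IsGeometricOnRay b c F) (hb : 0 < b)
    (hbc : b.Coprime c) (hlt : b + c < p) (hbj : b < j) (hj : j < b + c) :
    F (j : ℕ) = F (c : ℕ) := by
  have hc : (c : ZMod p) ≠ 0 := natCast_ne_zero_of_pos_of_lt (by lia) (by lia)
  have hj' : (j : ZMod p) ≠ 0 := natCast_ne_zero_of_pos_of_lt (by lia) (by lia)
  have hval : (1 : ZMod p).val ≤ (j / c : ZMod p).val := by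
    have : Fact (1 < p) := ⟨by lia⟩
    rw [ZMod.val_one]
    exact ZMod.val_pos.2 (div_ne_zero hj' hc)
  have h := map_eq_of_add_mul_eq (E := b + c - j) (u := j / c) (v := 1) hb hbc hlt hF
    (by lia) (by lia) one_ne_zero hval (by
      rw [Nat.cast_sub hj.le, mul_div_cancel₀ _ hc]
      push_cast
      ring)
  rwa [map_div₀, map_one, div_eq_one_iff_eq ((map_ne_zero F).2 hc)] at h

theorem IsGeometricOnRay.map_two_eq_one (hF : IsGeometricOnRay 1 2 F) (hlt : 3 < p) :
    F (2 : ℕ) = 1 := by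
  have rel {u v : ℕ} (hu : u < p) (hv : 0 < v) (hvu : v ≤ u) (huv : 3 * v = 2 * u + 1) :
      F (u : ℕ) = F (v : ℕ) := by
    refine map_eq_of_add_mul_eq (E := 1) one_pos (by simp) hlt hF one_pos one_lt_two
      (natCast_ne_zero_of_pos_of_lt hv (by lia)) ?_ ?_
    · rwa [ZMod.val_natCast_of_lt hu, ZMod.val_natCast_of_lt (by lia)]
    · have := congrArg (Nat.cast (R := ZMod p)) huv
      push_cast at this ⊢
      linear_combination this
  have h₃ : F (3 : ℕ) = 1 := hF.map_add_eq_one one_pos (by simp) hlt one_lt_two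
  have hcases := eq_five_or_eq_seven_or_eleven_le Fact.out hlt
  have h₄ : F (4 : ℕ) = 1 := (rel (by lia) (by lia) (by lia) (by lia)).trans h₃
  obtain rfl | rfl | h₁₁ := hcases
  · rw [show ((2 : ℕ) : ZMod 5) = (4 : ℕ) * (3 : ℕ) from rfl, map_mul, h₄, h₃, mul_one]
  · rw [show ((2 : ℕ) : ZMod 7) = (4 : ℕ) * (4 : ℕ) from rfl, map_mul, h₄, mul_one]
  · have h₇ : F (7 : ℕ) = F (5 : ℕ) := rel (by lia) (by lia) (by lia) (by lia)
    have h₁₀ : F (10 : ℕ) = F (7 : ℕ) := rel (by lia) (by lia) (by lia) (by lia)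
    have hne : F (5 : ℕ) ≠ 0 := (map_ne_zero F).2 (natCast_ne_zero_of_pos_of_lt (by lia) (by lia))
    rw [h₇, show 10 = 2 * 5 from rfl, Nat.cast_mul, map_mul] at h₁₀
    exact (mul_eq_right₀ hne).1 h₁₀

theorem IsGeometricOnRay.map_right_eq_one (hF : IsGeometricOnRay b c F) (hb : 0 < b)
    (hbc : b.Coprime c) (hlt : b + c < p) (hbc' : b < c) : F (c : ℕ) = 1 := by
  obtain hgap | rfl := hbc'.nat_succ_le.lt_or_eq
  · rw [← hF.map_natCast_eq_map_right (j := c - 1) hb hbc hlt (by lia) (by lia)]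
    exact hF.map_natCast_eq_one hb hbc hlt (by lia) (by lia)
  · obtain rfl | hb₁ := hb.nat_succ_le.eq_or_lt
    · exact hF.map_two_eq_one hlt
    · rw [← hF.map_natCast_eq_map_right (j := 2 * b) hb hbc hlt (by lia) (by lia), Nat.cast_mul,
        map_mul, hF.map_natCast_eq_one hb hbc hlt two_pos (by lia),
        hF.map_natCast_eq_one hb hbc hlt hb (by lia), mul_one]

theorem IsGeometricOnRay.map_sub_or_map_add (hF : IsGeometricOnRay b c F) (hb : 0 < b)
    (hbc : b.Coprime c) (hlt : b + c < p) (hc : 1 < c) {w : ZMod p} (hw : w ≠ 0) :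
    F ((b + c : ℕ) - w) = F (c : ℕ) ∨ F ((b + c : ℕ) + (c - 1 : ℕ) * w) = F (c : ℕ) := by
  have hc' : (c : ZMod p) ≠ 0 := natCast_ne_zero_of_pos_of_lt (by lia) (by lia)
  set u : ZMod p := ((b + c : ℕ) - w) / (c * w) with hu
  have hcu : c * u = (b + c) * w⁻¹ - 1 := by
    rw [hu]
    push_cast
    field_simp
  have key {s u' v' x : ZMod p} (hF' : F u' = F v') (hu' : x = c * (w * (s * u')))
      (hv' : w * (s * v') = 1) : F x = F (c : ℕ) := by
    rw [hu', map_mul, map_mul, map_mul, hF', ← map_mul, ← map_mul, hv', map_one, mul_one]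
  obtain hle | hlt' := le_or_gt (w⁻¹).val u.val
  · left
    refine key (s := 1) (map_eq_of_add_mul_eq (E := 1) hb hbc hlt hF one_pos hc (inv_ne_zero hw)
      hle ?_) ?_ ?_
    · push_cast
      linear_combination -hcu
    · rw [hu]
      field_simp
    · rw [one_mul, mul_inv_cancel₀ hw]
  · right
    refine key (s := -1) (map_eq_of_add_mul_eq (E := c - 1) (u := -1 - u) (v := -w⁻¹) hb hbc hlt hF
      (by lia) (by lia) (neg_ne_zero.2 (inv_ne_zero hw)) ?_ ?_) ?_ ?_
    · rw [val_neg_one_sub, ZMod.neg_val, if_neg (inv_ne_zero hw)]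
      lia
    · push_cast [Nat.cast_sub hc.le]
      linear_combination hcu
    · rw [hu]
      push_cast [Nat.cast_sub hc.le]
      field_simp
      ring
    · rw [neg_one_mul, neg_neg, mul_inv_cancel₀ hw]

theorem IsGeometricOnRay.map_eq_one_of_lt (hF : IsGeometricOnRay b c F) (hb : 0 < b)
    (hbc : b.Coprime c) (hlt : b + c < p) (hbc' : b < c) {x : ZMod p} (hx : x ≠ 0) : F x = 1 := by
  have hcsub : ((c - 1 : ℕ) : ZMod p) ≠ 0 := natCast_ne_zero_of_pos_of_lt (by lia) (by lia)
  refine map_eq_one_of_sub_or_add hcsub (hF.map_add_eq_one hb hbc hlt (by lia)) ?_ hx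
  intro w hw
  simpa only [hF.map_right_eq_one hb hbc hlt hbc'] using
    hF.map_sub_or_map_add hb hbc hlt (by lia) hw

end Rays

section Central

variable {G₀ : Type*} [CommGroupWithZero G₀] {p : ℕ} [Fact p.Prime] {b c : ℕ} {F : ZMod p →*₀ G₀}

theorem IsGeometricOnRay.map_two_mul_add_one {m : ℕ} (hF : IsGeometricOnRay 1 1 F)
    (hm : 2 * m + 2 < p) : F (2 * m + 1 : ℕ) = F (m + 1 : ℕ) := by
  have h₂ : F (2 : ℕ) ≠ 0 := (map_ne_zero F).2 (natCast_ne_zero_of_pos_of_lt two_pos (by lia))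
  have hcentral {n : ℕ} (hn : 2 * n < p) : F (n.centralBinom : ℕ) = F (2 : ℕ) ^ n := by
    have := hF n (binomMod_ne_zero (by lia))
    rwa [one_mul, binomMod_one_one, binomMod, ← two_mul, ← Nat.centralBinom_eq_two_mul_choose,
      ← Nat.cast_two] at this
  have h := congrArg (fun n : ℕ ↦ F n) (Nat.succ_mul_centralBinom_succ m)
  simp only [Nat.cast_mul _ (Nat.centralBinom _), Nat.cast_mul 2, map_mul] at h
  rw [hcentral (by lia), hcentral (by lia), mul_comm (F (2 : ℕ)), mul_assoc, ← pow_succ'] at h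
  exact (mul_right_cancel₀ (pow_ne_zero _ h₂) h).symm

theorem IsGeometricOnRay.map_two_eq_one_of_central (hF : IsGeometricOnRay 1 1 F) (hp : 7 ≤ p) :
    F (2 : ℕ) = 1 := by
  have h₂ : F (2 : ℕ) ≠ 0 := (map_ne_zero F).2 (natCast_ne_zero_of_pos_of_lt two_pos (by lia))
  have h₃ : F (3 : ℕ) = F (2 : ℕ) := hF.map_two_mul_add_one (m := 1) (by lia)
  have h₅ : F (5 : ℕ) = F (3 : ℕ) := hF.map_two_mul_add_one (m := 2) (by lia)
  have h₉ : F (3 * 3 : ℕ) = F (2 : ℕ) := by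
    obtain rfl | rfl | h₁₁ := eq_five_or_eq_seven_or_eleven_le (p := p) Fact.out (by lia)
    · lia
    · rfl
    · rw [hF.map_two_mul_add_one (m := 4) (by lia), h₅, h₃]
  rw [Nat.cast_mul, map_mul, h₃] at h₉
  exact (mul_eq_left₀ h₂).1 h₉

theorem IsGeometricOnRay.map_eq_one_of_central (hF : IsGeometricOnRay 1 1 F) (hp : p ≠ 2)
    (h₂ : F (2 : ℕ) = 1) {x : ZMod p} (hx : x ≠ 0) : F x = 1 := by
  have hodd : p % 2 = 1 := (Nat.Prime.mod_two_eq_one_iff_ne_two Fact.out).2 hp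
  have hmap (j : ℕ) (hj₀ : 0 < j) (hj : j < p) : F (j : ℕ) = 1 := by
    induction j using Nat.strong_induction_on with
    | _ j ih =>
      obtain ⟨m, rfl | rfl⟩ := j.even_or_odd'
      · rw [Nat.cast_mul, map_mul, h₂, ih m (by lia) (by lia) (by lia), mul_one]
      · obtain rfl | hm := m.eq_zero_or_pos
        · simp
        · rw [hF.map_two_mul_add_one (by lia), ih (m + 1) (by lia) (by lia) (by lia)]
  rw [← ZMod.natCast_zmod_val x]
  exact hmap x.val (ZMod.val_pos.2 hx) x.val_lt

theorem IsGeometricOnRay.map_eq_one (hF : IsGeometricOnRay b c F) (hb : 0 < b) (hc : 0 < c)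
    (hbc : b.Coprime c) (hlt : b + c < p) (h₂ : b + c = 2 → 7 ≤ p ∨ F (2 : ℕ) = 1) {x : ZMod p}
    (hx : x ≠ 0) : F x = 1 := by
  obtain h | rfl | h := lt_trichotomy b c
  · exact hF.map_eq_one_of_lt hb hbc hlt h hx
  · obtain rfl : b = 1 := (Nat.coprime_self b).1 hbc
    exact hF.map_eq_one_of_central (by lia) ((h₂ rfl).elim hF.map_two_eq_one_of_central id) hx
  · exact hF.symm.map_eq_one_of_lt hc hbc.symm (by lia) h hx

end Central

section QuotientMap

variable {K : Type*} [CommGroupWithZero K] [DecidablePred (· = (0 : K))] (H : Subgroup Kˣ)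

/-- The quotient map `Kˣ → Kˣ ⧸ H`, extended by `0 ↦ 0`. -/
def unitsQuotientMap : K →*₀ WithZero (Kˣ ⧸ H) :=
  (WithZero.map' (QuotientGroup.mk' H)).comp (.ofClass WithZero.withZeroUnitsEquiv.symm)

theorem unitsQuotientMap_eq_one_iff {u : Kˣ} : unitsQuotientMap H u = 1 ↔ u ∈ H := by
  simp [unitsQuotientMap, ← WithZero.coe_one]

end QuotientMap

section Values

variable {p d : ℕ} [Fact p.Prime]

theorem exists_binomMod_eq_mul (b c : ℕ) (hd : 0 < d) (hpd : p.Coprime d) (n m : ℕ) :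
    ∃ l : ℕ, (l : ZMod d) = n + m ∧
      binomMod p (c * l) (b * l) = binomMod p (c * n) (b * n) * binomMod p (c * m) (b * m) := by
  obtain ⟨k, hk, hdvd⟩ := exists_lt_pow_dvd_pow_sub_one (Fact.out : p.Prime).one_lt hd hpd
    (c * n + b * n)
  refine ⟨n + p ^ k * m, ?_, ?_⟩
  · have := (ZMod.intCast_zmod_eq_zero_iff_dvd _ d).2 hdvd
    push_cast at this ⊢
    linear_combination m * this
  · rw [← binomMod_add_pow_mul hk]
    ring_nf

variable [NeZero d]

/-- The pairs `(u, n)` such that `u` is the value modulo `p` of `C((b + c) * m, b * m)` for some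
`m ≡ n` modulo `d`, where `n` is written multiplicatively. -/
def raySubgroup (b c : ℕ) (hpd : p.Coprime d) : Subgroup ((ZMod p)ˣ × Multiplicative (ZMod d)) :=
  let S : Submonoid ((ZMod p)ˣ × Multiplicative (ZMod d)) :=
    { carrier := {x | ∃ n : ℕ, (n : ZMod d) = x.2.toAdd ∧ binomMod p (c * n) (b * n) = x.1}
      one_mem' := ⟨0, by simp [binomMod_zero_zero]⟩
      mul_mem' := by
        rintro x y ⟨n, hn, hx⟩ ⟨m, hm, hy⟩
        obtain ⟨l, hl, hxy⟩ := exists_binomMod_eq_mul b c (NeZero.pos d) hpd n m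
        exact ⟨l, by simp [hl, hn, hm], by simp [hxy, hx, hy]⟩ }
  { S with
    inv_mem' := fun {x} hx ↦ (Submonoid.powers_le (P := S)).2 hx <|
      (isOfFinOrder_of_finite x).mem_powers_iff_mem_zpowers.2 <|
        inv_mem (Subgroup.mem_zpowers x) }

/-- The nonzero values modulo `p` of `C((b + c) * m, b * m)` for `m` divisible by `d`. -/
def rayValues (b c : ℕ) (hpd : p.Coprime d) : Subgroup (ZMod p)ˣ :=
  (raySubgroup b c hpd).comap (MonoidHom.inl _ _)

variable {b c : ℕ} (hpd : p.Coprime d)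

theorem mem_rayValues {u : (ZMod p)ˣ} : u ∈ rayValues b c hpd ↔
    ∃ n, d ∣ n ∧ binomMod p (c * n) (b * n) = u := by
  simp only [← ZMod.natCast_eq_zero_iff]
  rfl

theorem mk_mem_raySubgroup (u : (ZMod p)ˣ) (n : ℕ) (h : binomMod p (c * n) (b * n) = u) :
    (u, Multiplicative.ofAdd (n : ZMod d)) ∈ raySubgroup b c hpd :=
  ⟨n, rfl, h⟩

theorem isGeometricOnRay_unitsQuotientMap (hω : binomMod p c b ≠ 0) :
    IsGeometricOnRay b c (unitsQuotientMap (rayValues b c hpd)) := by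
  intro n hn
  set u := Units.mk0 _ hn
  set w := Units.mk0 _ hω with hw
  have hmem : u / w ^ n ∈ rayValues b c hpd := by
    have hun := mk_mem_raySubgroup hpd u n rfl
    have hw₁ := mk_mem_raySubgroup (b := b) (c := c) hpd w 1 (by simp [hw])
    have h := div_mem hun (pow_mem hw₁ n)
    rwa [Prod.pow_mk, ← ofAdd_nsmul, nsmul_eq_mul, Nat.cast_one, mul_one, Prod.mk_div_mk,
      div_self'] at h
  rw [← unitsQuotientMap_eq_one_iff, Units.val_div_eq_div_val, map_div₀,
    Units.val_pow_eq_pow_val, map_pow] at hmem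
  exact eq_of_div_eq_one hmem

theorem rayValues_eq_top (hb : 0 < b) (hc : 0 < c) (hbc : b.Coprime c) (hlt : (b + c) * d < p)
    (h : b + c = 2 → d = 2 → p ≠ 5) : rayValues b c hpd = ⊤ := by
  have hd : 0 < d := NeZero.pos d
  have hlt' : b + c < p := (Nat.le_mul_of_pos_right _ hd).trans_lt hlt
  have hF := isGeometricOnRay_unitsQuotientMap (b := b) (c := c) hpd (binomMod_ne_zero (by lia))
  rw [Subgroup.eq_top_iff']
  intro u
  rw [← unitsQuotientMap_eq_one_iff]
  refine hF.map_eq_one hb hc hbc hlt' ?_ u.ne_zero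
  intro hbc₂
  obtain ⟨rfl, rfl⟩ : b = 1 ∧ c = 1 := by lia
  obtain hd₁ | hd₂ := hd.nat_succ_le.eq_or_lt
  · right
    have h₂ : binomMod p 1 1 ≠ 0 := binomMod_ne_zero (by lia)
    rw [Nat.cast_two, ← binomMod_one_one, ← Units.val_mk0 h₂, unitsQuotientMap_eq_one_iff,
      mem_rayValues]
    exact ⟨1, Nat.dvd_one.2 hd₁.symm, rfl⟩
  · left
    have := eq_five_or_eq_seven_or_eleven_le Fact.out (by lia : 3 < p)
    lia

theorem exists_binomMod_eq_of_ne_zero (hb : 0 < b) (hc : 0 < c) (hbc : b.Coprime c)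
    (hlt : (b + c) * d < p) (h : b + c = 2 → d = 2 → p ≠ 5) {v : ZMod p} (hv : v ≠ 0) :
    ∃ n, d ∣ n ∧ binomMod p (c * n) (b * n) = v := by
  have hd : 0 < d := NeZero.pos d
  have hpd : p.Coprime d := Nat.coprime_of_lt_prime hd.ne' (by nlinarith) Fact.out
  have hmem : Units.mk0 v hv ∈ rayValues b c hpd := by
    simp [rayValues_eq_top hpd hb hc hbc hlt h]
  exact (mem_rayValues hpd).1 hmem

end Values

section Affine

variable {p : ℕ} [Fact p.Prime] {a b : ℕ}

theorem exists_choose_mul_eq (hb : 0 < b) (hab : b < a) (hap : a < p) (h : (a, b, p) ≠ (4, 2, 5))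
    (v : ZMod p) : ∃ m, ((a * m).choose (b * m) : ZMod p) = v := by
  obtain rfl | hv := eq_or_ne v 0
  · have hlow (n : ℕ) (hn : 0 < n) (hnp : n < p) : n * (p - 1) = p - n + p ^ 1 * (n - 1) := by
      zify [hn, hnp.le, hap.pos]
      ring
    refine ⟨p - 1, ?_⟩
    rw [hlow a (by lia) hap, hlow b hb (by lia), choose_add_pow_mul p (by lia) (by lia),
      Nat.choose_eq_zero_of_lt (by lia), Nat.cast_zero, zero_mul]
  · obtain ⟨b', c, hbc, hb', hc⟩ := Nat.exists_coprime b (a - b)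
    set d := b.gcd (a - b)
    have : NeZero d := ⟨(Nat.gcd_pos_of_pos_left _ hb).ne'⟩
    have ha : a = (b' + c) * d := by lia
    have hb'₀ : 0 < b' := Nat.pos_of_mul_pos_right (hb' ▸ hb)
    have hc₀ : 0 < c := Nat.pos_of_mul_pos_right (hc ▸ Nat.sub_pos_of_lt hab)
    have hexc (hsum : b' + c = 2) (hd : d = 2) : p ≠ 5 := by
      rintro rfl
      obtain rfl : b' = 1 := by lia
      exact h (by rw [ha, hb', hsum, hd])
    obtain ⟨_, ⟨m, rfl⟩, hm⟩ :=
      exists_binomMod_eq_of_ne_zero hb'₀ hc₀ hbc (ha ▸ hap) hexc hv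
    refine ⟨m, ?_⟩
    rw [← hm, binomMod, ha, hb']
    congr 2 <;> ring

theorem choose_pow_mul_ne_zero {k v x : ℕ} (hvx : p ^ k * v ≤ x) (hx : x < p ^ k * p) :
    (x.choose (p ^ k * v) : ZMod p) ≠ 0 := by
  have hP : 0 < p ^ k := pow_pos (NeZero.pos p) k
  have h := choose_add_pow_mul p (Nat.mod_lt x hP) hP (x / p ^ k) v
  rw [Nat.mod_add_div, zero_add, Nat.choose_zero_right, Nat.cast_one, one_mul] at h
  rw [h]
  refine choose_ne_zero_of_lt ?_ (Nat.div_lt_of_lt_mul hx)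
  rwa [Nat.le_div_iff_mul_le hP, mul_comm]

theorem mul_le_and_lt_mul_of_mul_eq {a b p P v x D : ℤ} (hv : 0 < v) (hvb : v ≤ b) (hba : b < a)
    (hap : a < p) (hD : |D| < P) (hx : b * x = a * (P * v) + D) : P * v ≤ x ∧ x < P * p := by
  have hb : 0 < b := hv.trans_le hvb
  have hP : 0 < P := (abs_nonneg D).trans_lt hD
  have hPv : P ≤ P * v := le_mul_of_one_le_right hP.le hv
  have hPb : P * v ≤ P * b := mul_le_mul_of_nonneg_left hvb hP.le
  rw [abs_lt] at hD
  constructor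
  · refine le_of_mul_le_mul_left ?_ hb
    nlinarith
  · refine lt_of_mul_lt_mul_left ?_ hb.le
    nlinarith

theorem exists_gt_choose_ne_zero (hb : 0 < b) (hab : b < a) (hap : a < p) (α β : ℤ) (N : ℕ) :
    ∃ n x y : ℕ, N < n ∧ (a : ℤ) * n + α = x ∧ (b : ℤ) * n + β = y ∧
      (x.choose y : ZMod p) ≠ 0 := by
  have hp : p.Prime := Fact.out
  have hb' : (0 : ℤ) < b := mod_cast hb
  set D : ℤ := b * α - a * β
  obtain ⟨k, hk, hdvd⟩ := exists_lt_pow_dvd_pow_sub_one hp.one_lt hb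
    (Nat.coprime_of_lt_prime hb.ne' (by lia) hp) (b * (N + 1) + β.natAbs + D.natAbs)
  obtain ⟨j, hj, hjβ⟩ := exists_lt_dvd_sub_mul hb (Nat.coprime_one_left b) (β - 1)
  have hW : (b * (N + 1) + |β| + |D| : ℤ) < p ^ k := by
    rw [Int.abs_eq_natAbs, Int.abs_eq_natAbs]
    exact_mod_cast hk
  obtain ⟨n, hn⟩ : (b : ℤ) ∣ p ^ k * (j + 1) - β := by
    have := (hdvd.mul_right (j + 1)).sub hjβ
    rwa [Nat.cast_one, one_mul, show ((p : ℤ) ^ k - 1) * (j + 1) - (β - 1 - j) =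
      p ^ k * (j + 1) - β by ring] at this
  have hNn : (N : ℤ) + 1 < n := by
    refine lt_of_mul_lt_mul_left (a := (b : ℤ)) ?_ hb'.le
    have : (p : ℤ) ^ k ≤ p ^ k * (j + 1) := le_mul_of_one_le_right (by positivity) (by lia)
    linarith [hW, le_abs_self β, abs_nonneg D]
  lift n to ℕ using by lia
  have hx : (b : ℤ) * (a * n + α) = a * (p ^ k * (j + 1)) + D := by
    linear_combination -(a : ℤ) * hn
  have hDW : |D| < (p : ℤ) ^ k := by
    have : (0 : ℤ) ≤ b * (N + 1) := by positivity
    linarith [hW, abs_nonneg β]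
  obtain ⟨hle, hlt⟩ := mul_le_and_lt_mul_of_mul_eq (p := p) (by lia) (by lia) (mod_cast hab)
    (mod_cast hap) hDW hx
  have hx₀ : (0 : ℤ) ≤ a * n + α := le_trans (by positivity) hle
  obtain ⟨x, hxn⟩ := Int.eq_ofNat_of_zero_le hx₀
  rw [hxn] at hle hlt
  refine ⟨n, x, p ^ k * (j + 1), by lia, hxn, ?_, choose_pow_mul_ne_zero ?_ ?_⟩
  · push_cast
    linear_combination -hn
  · exact_mod_cast hle
  · exact_mod_cast hlt

theorem stmt_13_general (a b : ℕ) (hb : 0 < b) (hab : b < a) (α β : ℤ) (p : ℕ) (hp : p.Prime)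
    (hap : a < p) (h : (a, b, p) ≠ (4, 2, 5)) (r N : ℕ) :
    ∃ n : ℕ, N ≤ n ∧ 0 < n ∧ 0 ≤ (a : ℤ) * n + α ∧ 0 ≤ (b : ℤ) * n + β ∧
      Nat.choose ((a : ℤ) * n + α).toNat ((b : ℤ) * n + β).toNat ≡ r [MOD p] := by
  have : Fact p.Prime := ⟨hp⟩
  obtain ⟨n, x, y, hn, hx, hy, hne⟩ := exists_gt_choose_ne_zero hb hab hap α β N
  obtain ⟨m, hm⟩ := exists_choose_mul_eq hb hab hap h (r / x.choose y)
  have hlt : x + y < p ^ (x + y) := Nat.lt_pow_self hp.one_lt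
  have hx' : (a : ℤ) * (n + p ^ (x + y) * m : ℕ) + α = (x + p ^ (x + y) * (a * m) : ℕ) := by
    push_cast
    linear_combination hx
  have hy' : (b : ℤ) * (n + p ^ (x + y) * m : ℕ) + β = (y + p ^ (x + y) * (b * m) : ℕ) := by
    push_cast
    linear_combination hy
  refine ⟨n + p ^ (x + y) * m, by lia, by lia, hx' ▸ Int.natCast_nonneg _,
    hy' ▸ Int.natCast_nonneg _, ?_⟩
  rw [hx', hy', Int.toNat_natCast, Int.toNat_natCast, ← ZMod.natCast_eq_natCast_iff,
    choose_add_pow_mul p (by lia) (by lia), hm, mul_div_cancel₀ _ hne]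

end Affine

/-- Theorem 4.2(i): let `a > b` be positive integers, `α, β` integers,
`d = gcd(a,b)`, `c = a/d`, `p` a prime with `p > a + 2b`, and `e = gcd(p-1, a)`.
If `e < c` or `ν₂(a) ≤ ν₂(p-1)`, then for every `r` with `0 ≤ r ≤ p-1` there are
infinitely many positive integers `n` (with `a*n+α ≥ 0` and `b*n+β ≥ 0`) such that
`C(a*n+α, b*n+β) ≡ r (mod p)`. -/
theorem stmt_13 (a b : ℕ) (hb : 0 < b) (hab : b < a) (α β : ℤ)
    (d c : ℕ) (hd : d = Nat.gcd a b) (hc : c = a / d)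
    (p : ℕ) (hp : p.Prime) (hpab : a + 2 * b < p)
    (e : ℕ) (he : e = Nat.gcd (p - 1) a)
    (h : e < c ∨ padicValNat 2 a ≤ padicValNat 2 (p - 1)) :
    ∀ r : ℕ, r ≤ p - 1 → ∀ N : ℕ, ∃ n : ℕ, N ≤ n ∧ 0 < n ∧
      0 ≤ (a : ℤ) * n + α ∧ 0 ≤ (b : ℤ) * n + β ∧
      Nat.choose ((a : ℤ) * n + α).toNat ((b : ℤ) * n + β).toNat ≡ r [MOD p] := by
  intro r _ N
  exact stmt_13_general a b hb hab α β p hp (by lia) (by rintro ⟨⟩; contradiction) r N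
end

section
/- Let a > b be positive integers, let α and β be integers, let d = gcd(a,b), c = a/d, and let p be a prime with p > a + 2b, and set e = gcd(p−1, a). Suppose e ≥ c and ν₂(a) > ν₂(p−1). Then for every integer r with 0 ≤ r ≤ p−1 such that r is not congruent modulo p to any number of the form (2μ−1)e + p + α − 2 + r′ with integers r′, μ satisfying 0 ≤ r′ ≤ e−c and ⌈(e+2−p−α)/(2e)⌉ ≤ μ ≤ ⌈(c+1−α)/(2e)⌉, there exist infinitely many positive integers n (with an+α ≥ 0 and bn+β ≥ 0) such that C(an+α, bn+β) ≡ r (mod p). -/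
/-!
Adding `(a, b) * n` to a pair of carries in base `p`, one digit of `n` at a time, produces digits of
the two entries and a new pair of carries, and by Lucas' theorem the binomial coefficients mod `p`
multiply along the way. Any start reaches the zero carries with a nonzero value, so it suffices that
the values `C(a n, b n)` mod `p`, which form a submonoid of `ZMod p`, exhaust it.

Passing to `a - b`, let `2 b < a`, and put `c = a / gcd a b`, `b' = b / gcd a b` and `g = c - b'`.
Reading the same digit from two neighbouring carries puts `x / t` into the submonoid for all
residues `t ≤ x` on a line `c t = g x + w` with `0 < w < g`. The line carries `(p - 1) / 2` such
ratios, and a proper submonoid has at most that many nonzero elements. So if it were proper, each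
line would decide which of its ratios belong to the submonoid, and for `v = c / 2 + 1` it would
contain `v / g` and `2` but not `2 v / g`.

For `a = 2 b` the submonoid contains the ratios `(2 m + 1) / (m + 1)`, which generate everything.
These arguments need `p ≥ 11`; smaller primes are checked directly.
-/

section Binomials

variable {p : ℕ}

lemma natCast_zmod_inj_of_lt {m n : ℕ} (hm : m < p) (hn : n < p) (h : (m : ZMod p) = n) :
    m = n := by
  rw [← ZMod.val_natCast_of_lt hm, h, ZMod.val_natCast_of_lt hn]

lemma natCast_zmod_ne_zero_of_lt {n : ℕ} (hn : 0 < n) (hnp : n < p) : (n : ZMod p) ≠ 0 := fun h =>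
  hn.ne' (natCast_zmod_inj_of_lt hnp (hn.trans hnp) (by rw [h, Nat.cast_zero]))

variable [hp : Fact p.Prime]

lemma cast_choose_ne_zero_of_lt {n k : ℕ} (hn : n < p) (hk : k ≤ n) :
    (n.choose k : ZMod p) ≠ 0 := by
  rw [Ne, ZMod.natCast_eq_zero_iff, ← hp.out.coprime_iff_not_dvd]
  exact hp.out.coprime_choose_of_lt hn hk

lemma cast_choose_add_pow_mul {k x s : ℕ} (hx : x < p ^ k) (hs : s < p ^ k) (x' s' : ℕ) :
    ((x + p ^ k * x').choose (s + p ^ k * s') : ZMod p) = x.choose s * x'.choose s' := by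
  have hdigit (y y' i : ℕ) (hi : i ∈ Finset.range k) :
      (y + p ^ k * y') / p ^ i % p = y / p ^ i % p := by
    obtain ⟨j, rfl⟩ := Nat.exists_eq_add_of_lt (Finset.mem_range.1 hi)
    rw [show p ^ (i + j + 1) * y' = p ^ i * (p * (p ^ j * y')) by ring,
      Nat.add_mul_div_left _ _ (pow_pos hp.out.pos i), Nat.add_mul_mod_self_left]
  have hquot {y : ℕ} (hy : y < p ^ k) (y' : ℕ) : (y + p ^ k * y') / p ^ k = y' := by
    rw [Nat.add_mul_div_left _ _ (pow_pos hp.out.pos k), Nat.div_eq_of_lt hy, zero_add]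
  have hlow := (ZMod.intCast_eq_intCast_iff _ _ p).2 (Choose.choose_modEq_prod_range_choose hx hs)
  have hall := (ZMod.intCast_eq_intCast_iff _ _ p).2
    (Choose.choose_modEq_choose_mul_prod_range_choose (p := p)
      (n := x + p ^ k * x') (k := s + p ^ k * s') k)
  rw [hquot hx, hquot hs, Finset.prod_congr rfl fun i hi => by
    rw [hdigit x x' i hi, hdigit s s' i hi]] at hall
  push_cast at hlow hall
  rw [hall, hlow, mul_comm]

lemma cast_choose_pow_sub_one {k n s : ℕ} (hn : n + 1 = p ^ k) (hs : s ≤ n) :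
    (n.choose s : ZMod p) = (-1) ^ s := by
  induction s with
  | zero => simp
  | succ s ih =>
    have hpascal : ((p ^ k).choose (s + 1) : ZMod p) = n.choose s + n.choose (s + 1) := by
      rw [← hn, Nat.choose_succ_succ, Nat.cast_add]
    have hzero : ((p ^ k).choose (s + 1) : ZMod p) = 0 :=
      (ZMod.natCast_eq_zero_iff _ _).2 (hp.out.dvd_choose_pow (by omega) (by omega))
    rw [pow_succ]
    linear_combination hzero - hpascal - ih (by omega)

lemma cast_choose_pow_sub_two {k n s : ℕ} (hn : n + 2 = p ^ k) (hk : k ≠ 0) (hs : s ≤ n) :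
    (n.choose s : ZMod p) = (-1) ^ s * (s + 1) := by
  have hn0 : (n : ZMod p) + 2 = 0 := by
    have : ((n + 2 : ℕ) : ZMod p) = 0 := by simp [hn, hk]
    exact_mod_cast this
  have hmul := congrArg (Nat.cast (R := ZMod p)) (Nat.choose_mul_succ_eq n s)
  rw [Nat.cast_mul, Nat.cast_mul, cast_choose_pow_sub_one (n := n + 1) hn (by omega),
    Nat.cast_sub (by omega)] at hmul
  push_cast at hmul
  linear_combination -hmul + ((n.choose s : ZMod p) - (-1) ^ s) * hn0

lemma cast_choose_succ_div_choose {x s : ℕ} (hs : s ≤ x) (hx : x + 1 < p) :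
    ((x + 1).choose s / x.choose s : ZMod p) = (x + 1 : ℕ) / (x + 1 - s : ℕ) := by
  rw [div_eq_div_iff (cast_choose_ne_zero_of_lt (by omega) hs)
    (natCast_zmod_ne_zero_of_lt (by omega) (by omega)), mul_comm ((x + 1 : ℕ) : ZMod p)]
  exact_mod_cast congrArg (Nat.cast (R := ZMod p)) (Nat.choose_mul_succ_eq x s).symm

lemma cast_choose_two_mul_add_two_div {s : ℕ} (hs : 2 * s + 2 < p) :
    ((2 * s + 2).choose (s + 1) / (2 * s).choose s : ZMod p) = 2 * ((2 * s + 1) / (s + 1)) := by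
  have hs0 : (s + 1 : ZMod p) ≠ 0 := by
    exact_mod_cast natCast_zmod_ne_zero_of_lt (p := p) s.succ_pos (by omega)
  rw [mul_div_assoc', div_eq_div_iff (cast_choose_ne_zero_of_lt (by omega) (by omega)) hs0,
    mul_comm]
  have := Nat.succ_mul_centralBinom_succ s
  rw [Nat.centralBinom_eq_two_mul_choose, Nat.centralBinom_eq_two_mul_choose] at this
  exact_mod_cast congrArg (Nat.cast (R := ZMod p)) this

lemma exists_lt_pow_eq_mul_add_one {a : ℕ} (h : p.Coprime a) (m : ℕ) :
    ∃ k q : ℕ, m < p ^ k ∧ p ^ k = a * q + 1 := by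
  have ha : 0 < a := Nat.pos_of_ne_zero fun ha => hp.out.one_lt.ne' (by simpa [ha] using h)
  have hmod : 1 ≡ p ^ (a.totient * m) [MOD a] := by
    simpa only [pow_mul, one_pow] using ((Nat.ModEq.pow_totient h).pow m).symm
  obtain ⟨q, hq⟩ := (Nat.modEq_iff_dvd' (Nat.one_le_pow _ _ hp.out.pos)).1 hmod
  have hlt : m < p ^ (a.totient * m) :=
    (Nat.lt_pow_self hp.out.one_lt).trans_le
      (Nat.pow_le_pow_right hp.out.pos (Nat.le_mul_of_pos_left m (Nat.totient_pos.2 ha)))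
  exact ⟨a.totient * m, q, hlt, by omega⟩

end Binomials

section Counting

variable {p : ℕ}

lemma two_mul_sum_zmod_val [NeZero p] : 2 * ∑ x : ZMod p, x.val = p * (p - 1) := by
  obtain ⟨n, rfl⟩ := Nat.exists_eq_succ_of_ne_zero (NeZero.ne p)
  rw [← Finset.sum_range_id_mul_two, ← Fin.sum_univ_eq_sum_range, mul_comm]
  rfl

-- `(x - f x).val + (f x).val` exceeds `x.val` by `p` exactly when the subtraction borrows.
lemma two_mul_card_val_lt [NeZero p] {f : ZMod p → ZMod p} (hf : f.Bijective)
    (hsub : (fun x => x - f x).Bijective) :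
    2 * (Finset.univ.filter fun x => x.val < (f x).val).card = p - 1 := by
  have hborrow (x : ZMod p) :
      (x - f x).val + (f x).val = x.val + p * if x.val < (f x).val then 1 else 0 := by
    have hx := sub_add_cancel x (f x)
    have hlt := (x - f x).val_lt
    rcases lt_or_ge ((x - f x).val + (f x).val) p with h | h
    · have := ZMod.val_add_of_lt h
      rw [hx] at this
      rw [if_neg (by omega)]
      omega
    · have := ZMod.val_add_val_of_le h
      rw [hx] at this
      rw [if_pos (by omega)]
      omega
  have hsum := Finset.sum_congr (rfl : Finset.univ = Finset.univ) fun x _ => hborrow x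
  rw [Finset.sum_add_distrib, Finset.sum_add_distrib, hf.sum_comp fun x => x.val,
    hsub.sum_comp fun x => x.val, ← Finset.mul_sum, ← Finset.card_filter] at hsum
  refine Nat.eq_of_mul_eq_mul_left (NeZero.pos p) ?_
  rw [← two_mul_sum_zmod_val (p := p), Nat.add_left_cancel hsum]
  ring

variable [hp : Fact p.Prime]

lemma two_mul_card_affine_val_le {u w : ZMod p} (hu : u ≠ 0) (hu' : u ≠ 1) :
    2 * (Finset.univ.filter fun x => u * x + w ≠ 0 ∧ (u * x + w).val ≤ x.val).card = p - 1 := by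
  have hbij {u : ZMod p} (hu : u ≠ 0) (w : ZMod p) : (fun x => u * x + w).Bijective :=
    (Equiv.addRight w).bijective.comp (mulLeft_bijective₀ u hu)
  have hlt := two_mul_card_val_lt (hbij hu w) (by
    convert hbij (sub_ne_zero.2 hu'.symm) (-w) using 2 with x
    ring)
  have hcompl := Finset.card_filter_add_card_filter_not (s := Finset.univ)
    (fun x : ZMod p => x.val < (u * x + w).val)
  have hroot : (Finset.univ.filter fun x => ¬ x.val < (u * x + w).val) =
      insert (-w / u) (Finset.univ.filter fun x => u * x + w ≠ 0 ∧ (u * x + w).val ≤ x.val) := by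
    ext x
    have hx : u * x + w = 0 ↔ x = -w / u := by
      rw [eq_div_iff hu, ← add_eq_zero_iff_eq_neg, mul_comm x]
    by_cases h : u * x + w = 0 <;>
      simp [← hx, h]
  rw [hroot, Finset.card_insert_of_notMem (by simp [mul_div_cancel₀ _ hu])] at hcompl
  rw [Finset.card_univ, ZMod.card] at hcompl
  omega

end Counting

section Submonoids

variable {p : ℕ} [hp : Fact p.Prime] {S : Submonoid (ZMod p)}

lemma inv_mem_of_mem_submonoid {x : ZMod p} (hx : x ∈ S) : x⁻¹ ∈ S := by
  rcases eq_or_ne x 0 with rfl | hx0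
  · rwa [inv_zero]
  · have h : x ^ (p - 2) * x = 1 := by
      rw [← pow_succ, show p - 2 + 1 = p - 1 by have := hp.out.two_le; omega,
        ZMod.pow_card_sub_one_eq_one hx0]
    rw [← eq_inv_of_mul_eq_one_left h]
    exact pow_mem hx _

lemma div_mem_of_mem_submonoid {x y : ZMod p} (hx : x ∈ S) (hy : y ∈ S) : x / y ∈ S := by
  rw [div_eq_mul_inv]
  exact mul_mem hx (inv_mem_of_mem_submonoid hy)

open scoped Classical in
lemma two_mul_card_mem_le {v : ZMod p} (hv : v ≠ 0) (hvS : v ∉ S) :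
    2 * (Finset.univ.filter fun x => x ≠ 0 ∧ x ∈ S).card ≤ p - 1 := by
  have hle : ((Finset.univ.erase 0).filter (· ∈ S)).card ≤
      ((Finset.univ.erase 0).filter (· ∉ S)).card := by
    refine Finset.card_le_card_of_injOn (v * ·) (fun x hx => ?_) (mul_right_injective₀ hv).injOn
    simp only [Finset.coe_filter, Finset.mem_erase, Finset.mem_univ, and_true,
      Set.mem_ofPred_eq] at hx ⊢
    refine ⟨mul_ne_zero hv hx.1, fun hvx => hvS ?_⟩
    rw [← mul_div_cancel_right₀ v hx.1]
    exact div_mem_of_mem_submonoid hvx hx.2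
  have hadd := Finset.card_filter_add_card_filter_not (s := Finset.univ.erase (0 : ZMod p)) (· ∈ S)
  rw [Finset.card_erase_of_mem (Finset.mem_univ 0), Finset.card_univ, ZMod.card] at hadd
  have hfilter : (Finset.univ.filter fun x => x ≠ 0 ∧ x ∈ S) =
      (Finset.univ.erase 0).filter (· ∈ S) := by
    ext x
    simp
  rw [hfilter]
  omega

/- A proper submonoid misses half of the nonzero residues, so the half produced by the lines
already exhausts it. -/
open scoped Classical in
lemma div_mem_iff_val_le_of_notMem {v : ZMod p} (hv : v ≠ 0) (hvS : v ∉ S) {u w : ZMod p}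
    (hu : u ≠ 0) (hu' : u ≠ 1) (hw : w ≠ 0)
    (h : ∀ x, u * x + w ≠ 0 → (u * x + w).val ≤ x.val → x / (u * x + w) ∈ S)
    {x : ZMod p} (hx : x ≠ 0) (hxw : u * x + w ≠ 0) :
    x / (u * x + w) ∈ S ↔ (u * x + w).val ≤ x.val := by
  refine ⟨fun hmem => ?_, h x hxw⟩
  have hinj {x y : ZMod p} (hx : u * x + w ≠ 0) (hy : u * y + w ≠ 0)
      (hxy : x / (u * x + w) = y / (u * y + w)) : x = y := by
    rw [div_eq_div_iff hx hy] at hxy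
    exact mul_right_cancel₀ hw (by linear_combination hxy)
  have hsurj := Finset.surjOn_of_injOn_of_card_le (fun x => x / (u * x + w))
    (s := Finset.univ.filter fun x => u * x + w ≠ 0 ∧ (u * x + w).val ≤ x.val)
    (t := Finset.univ.filter fun x => x ≠ 0 ∧ x ∈ S)
    (fun x hx => by
      simp only [Finset.coe_filter, Finset.mem_univ, true_and, Set.mem_ofPred_eq] at hx ⊢
      refine ⟨div_ne_zero (fun hx0 => hx.1 ?_) hx.1, h x hx.1 hx.2⟩
      subst hx0
      simpa using hx.2)
    (fun x hx y hy => by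
      simp only [Finset.coe_filter, Finset.mem_univ, true_and, Set.mem_ofPred_eq] at hx hy
      exact hinj hx.1 hy.1)
    (by
      have := two_mul_card_affine_val_le (w := w) hu hu'
      have := two_mul_card_mem_le hv hvS
      omega)
  obtain ⟨y, hy, hyx⟩ := hsurj (by simpa using ⟨div_ne_zero hx hxw, hmem⟩)
  simp only [Finset.coe_filter, Finset.mem_univ, true_and, Set.mem_ofPred_eq] at hy
  rw [hinj hxw hy.1 hyx.symm]
  exact hy.2

lemma two_mem_of_forall_odd_div_mem (hp11 : 11 ≤ p)
    (h : ∀ m : ℕ, 2 * m + 2 < p → ((2 * m + 1) / (m + 1) : ZMod p) ∈ S) : (2 : ZMod p) ∈ S := by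
  have hne (n : ℕ) (hn : 0 < n) (hn11 : n < 11) : (n : ZMod p) ≠ 0 :=
    natCast_zmod_ne_zero_of_lt hn (by omega)
  have h2 := hne 2 (by omega) (by omega)
  have h3 := hne 3 (by omega) (by omega)
  have h5 := hne 5 (by omega) (by omega)
  push_cast at h2 h3 h5
  have hthree : (3 : ZMod p) ∈ S := by
    have hmul : ((2 * (2 : ℕ) + 1) / ((2 : ℕ) + 1) * ((2 * (4 : ℕ) + 1) / ((4 : ℕ) + 1)) : ZMod p) =
        3 := by
      norm_num
      field_simp
      norm_num
    exact hmul ▸ mul_mem (h 2 (by omega)) (h 4 (by omega))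
  have hdiv : (3 / ((2 * (1 : ℕ) + 1) / ((1 : ℕ) + 1)) : ZMod p) = 2 := by
    norm_num
    field_simp
  exact hdiv ▸ div_mem_of_mem_submonoid hthree (h 1 (by omega))

lemma mem_of_forall_odd_div_mem (hp11 : 11 ≤ p)
    (h : ∀ m : ℕ, 2 * m + 2 < p → ((2 * m + 1) / (m + 1) : ZMod p) ∈ S) {v : ZMod p} (hv : v ≠ 0) :
    v ∈ S := by
  have hnat (n : ℕ) (hn : 0 < n) (hnp : n < p) : (n : ZMod p) ∈ S := by
    induction n using Nat.strong_induction_on with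
    | _ n ih =>
    rcases Nat.even_or_odd' n with ⟨m, rfl | rfl⟩
    · rw [Nat.cast_mul]
      exact mul_mem (two_mem_of_forall_odd_div_mem hp11 h) (ih m (by omega) (by omega) (by omega))
    · rcases Nat.eq_zero_or_pos m with rfl | hm
      · simp
      have hodd := hp.out.eq_two_or_odd
      have hmul := mul_mem (h m (by omega)) (ih (m + 1) (by omega) (by omega) (by omega))
      have hm0 : (m + 1 : ZMod p) ≠ 0 := by
        exact_mod_cast natCast_zmod_ne_zero_of_lt (p := p) m.succ_pos (by omega)
      rw [Nat.cast_add_one, div_mul_cancel₀ _ hm0] at hmul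
      exact_mod_cast hmul
  rw [← ZMod.natCast_rightInverse v]
  exact hnat _ (Nat.pos_of_ne_zero ((ZMod.val_ne_zero v).2 hv)) v.val_lt

end Submonoids

section Sorting

variable {p : ℕ} [hp : Fact p.Prime] {S : Submonoid (ZMod p)} {c g : ℕ}

/-- `S` sorts the lines of slope `g / c`: for `0 < w < g`, a point `(x, t)` of `c t = g x + w` with
nonzero coordinates has its ratio `x / t` in `S` exactly when the residues `t ≤ x` in
`[0, p)` are in this order. -/
def SortsLines (S : Submonoid (ZMod p)) (c g : ℕ) : Prop :=
  ∀ w : ℕ, 0 < w → w < g → ∀ x t : ZMod p, x ≠ 0 → t ≠ 0 → c * t = g * x + w →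
    (x / t ∈ S ↔ t.val ≤ x.val)

lemma zmod_val_neg_one : (-1 : ZMod p).val = p - 1 := by
  rw [ZMod.val_neg_of_ne_zero, ZMod.val_one]

namespace SortsLines

lemma div_mem_of_lt (h : SortsLines S c g) (hgp : g < p) (hcp : c < p) {v : ℕ} (hv : 0 < v)
    (hcv : c < v + g) (hvc : v < c) : (v / g : ZMod p) ∈ S := by
  have hg0 : (g : ZMod p) ≠ 0 := natCast_zmod_ne_zero_of_lt (by omega) hgp
  have hv0 : (v : ZMod p) ≠ 0 := natCast_zmod_ne_zero_of_lt hv (by omega)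
  have hx0 : (v / g : ZMod p) ≠ 0 := div_ne_zero hv0 hg0
  rw [← div_one (v / g : ZMod p)]
  refine (h (c - v) (by omega) (by omega) _ _ hx0 one_ne_zero ?_).2 ?_
  · rw [mul_div_cancel₀ _ hg0, Nat.cast_sub hvc.le]
    ring
  · rw [ZMod.val_one]
    exact Nat.one_le_iff_ne_zero.2 ((ZMod.val_ne_zero _).2 hx0)

lemma div_mem_of_lt_slope (h : SortsLines S c g) (hgp : g < p) (hc : 0 < c) (hcp : c < p) {v : ℕ}
    (hv : 0 < v) (hvg : v < g) : (c / v : ZMod p) ∈ S := by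
  have hc0 : (c : ZMod p) ≠ 0 := natCast_zmod_ne_zero_of_lt hc hcp
  have hv0 : (v : ZMod p) ≠ 0 := natCast_zmod_ne_zero_of_lt hv (by omega)
  have hratio : (c / v : ZMod p) = -1 / (-(v / c)) := by
    rw [neg_div_neg_eq, one_div_div]
  rw [hratio]
  refine (h (g - v) (by omega) (by omega) _ _ (neg_ne_zero.2 one_ne_zero)
    (neg_ne_zero.2 (div_ne_zero hv0 hc0)) ?_).2 ?_
  · rw [mul_neg, mul_div_cancel₀ _ hc0, Nat.cast_sub hvg.le]
    ring
  · rw [zmod_val_neg_one]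
    exact Nat.le_sub_one_of_lt (ZMod.val_lt _)

lemma div_notMem_of_gt (h : SortsLines S c g) (hgc : g < c) {v : ℕ} (hcv : c < v)
    (hvc : v < c + g) (hvp : v < p) : (v / g : ZMod p) ∉ S := by
  have hg0 : (g : ZMod p) ≠ 0 := natCast_zmod_ne_zero_of_lt (by omega) (by omega)
  have hv0 : (v : ZMod p) ≠ 0 := natCast_zmod_ne_zero_of_lt (by omega) hvp
  have hx1 : -(v / g : ZMod p) ≠ -1 := by
    rw [Ne, neg_inj, div_eq_one_iff_eq hg0]
    exact fun hvg => (hgc.trans hcv).ne' (natCast_zmod_inj_of_lt hvp (by omega) hvg)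
  have hratio : (v / g : ZMod p) = -(v / g) / -1 := by rw [neg_div_neg_eq, div_one]
  rw [hratio, h (v - c) (by omega) (by omega) _ _ (neg_ne_zero.2 (div_ne_zero hv0 hg0))
    (neg_ne_zero.2 one_ne_zero), zmod_val_neg_one]
  · refine fun hle => hx1 (ZMod.val_injective p ?_)
    rw [zmod_val_neg_one]
    exact (Nat.le_sub_one_of_lt (ZMod.val_lt _)).antisymm hle
  · rw [mul_neg, mul_neg, mul_div_cancel₀ _ hg0, Nat.cast_sub hcv.le]
    ring

lemma two_mem (h : SortsLines S c g) (hp11 : 11 ≤ p) (hgc : g < c) (hcg : c < 2 * g)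
    (hcp : c < p) : (2 : ZMod p) ∈ S := by
  rcases lt_or_ge 2 g with hg | hg
  · have hc0 : (c : ZMod p) ≠ 0 := natCast_zmod_ne_zero_of_lt (by omega) hcp
    have hdiv {v : ℕ} (hv : 0 < v) (hvg : v < g) : (c / v : ZMod p) ∈ S :=
      h.div_mem_of_lt_slope (by omega) (by omega) hcp hv hvg
    have := div_mem_of_mem_submonoid (hdiv one_pos (by omega)) (hdiv two_pos hg)
    rwa [Nat.cast_one, div_one, Nat.cast_ofNat, div_div_cancel₀ hc0] at this
  · obtain rfl : g = 2 := by omega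
    obtain rfl : c = 3 := by omega
    have hne {v : ℕ} (hv : 0 < v) (hv11 : v < 11) : (v : ZMod p) ≠ 0 :=
      natCast_zmod_ne_zero_of_lt hv (by omega)
    have hdiv {x t : ℕ} (ht : 0 < t) (htx : t ≤ x) (hx : x < 11) (heq : 3 * t = 2 * x + 1) :
        (x / t : ZMod p) ∈ S := by
      refine (h 1 one_pos one_lt_two _ _ (hne (ht.trans_le htx) hx) (hne ht (by omega)) ?_).2 ?_
      · exact_mod_cast congrArg (Nat.cast (R := ZMod p)) heq
      · rwa [ZMod.val_natCast_of_lt (by omega), ZMod.val_natCast_of_lt (by omega)]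
    have hmul := mul_mem (hdiv (x := 7) (t := 5) (by omega) (by omega) (by omega) (by omega))
      (hdiv (x := 10) (t := 7) (by omega) (by omega) (by omega) (by omega))
    have htwo : (7 / 5 * (10 / 7) : ZMod p) = 2 := by
      have h5 : (5 : ZMod p) ≠ 0 := hne (v := 5) (by omega) (by omega)
      have h7 : (7 : ZMod p) ≠ 0 := hne (v := 7) (by omega) (by omega)
      field_simp
      norm_num
    rw [← htwo]
    exact_mod_cast hmul

end SortsLines

-- `v = c / 2 + 1` lies below `c` and its double between `c` and `c + g`.
lemma not_sortsLines (hp11 : 11 ≤ p) (hgc : g < c) (hcg : c < 2 * g) (hcp : c + 1 < p) :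
    ¬ SortsLines S c g := by
  intro h
  have hodd := hp.out.eq_two_or_odd
  refine h.div_notMem_of_gt hgc (v := 2 * (c / 2 + 1)) (by omega) (by omega) (by omega) ?_
  rw [Nat.cast_mul, mul_div_assoc]
  exact mul_mem (h.two_mem hp11 hgc hcg (by omega))
    (h.div_mem_of_lt (by omega) (by omega) (by omega) (by omega) (by omega))

lemma mem_of_forall_div_mem (hp11 : 11 ≤ p) (hgc : g < c) (hcg : c < 2 * g) (hcp : c + 1 < p)
    (h : ∀ w : ℕ, 0 < w → w < g → ∀ x t : ZMod p, t ≠ 0 → c * t = g * x + w →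
      t.val ≤ x.val → x / t ∈ S)
    {v : ZMod p} (hv : v ≠ 0) : v ∈ S := by
  by_contra hvS
  refine not_sortsLines (S := S) hp11 hgc hcg hcp fun w hw hwg x t hx ht hline => ?_
  have hc0 : (c : ZMod p) ≠ 0 := natCast_zmod_ne_zero_of_lt (by omega) (by omega)
  have hg0 : (g : ZMod p) ≠ 0 := natCast_zmod_ne_zero_of_lt (by omega) (by omega)
  have hw0 : (w : ZMod p) ≠ 0 := natCast_zmod_ne_zero_of_lt hw (by omega)
  have hgc1 : (g / c : ZMod p) ≠ 1 := fun hgc1 => hgc.ne <|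
    natCast_zmod_inj_of_lt (by omega) (by omega) ((div_eq_one_iff_eq hc0).1 hgc1)
  have heq (x : ZMod p) : (g / c * x + w / c : ZMod p) = (g * x + w) / c := by ring
  obtain rfl : t = g / c * x + w / c := by rw [heq, ← hline, mul_div_cancel_left₀ _ hc0]
  exact div_mem_iff_val_le_of_notMem hv hvS (div_ne_zero hg0 hc0) hgc1 (div_ne_zero hw0 hc0)
    (fun x hx hle => h w hw hwg x _ hx (by rw [heq, mul_div_cancel₀ _ hc0]) hle) hx ht

end Sorting

section CarryPaths

variable {p a b : ℕ}

/-- Adding `(a, b) * n` to the carries `σ` in base `p` produces, over some number of digits, the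
binomial value `v = C(x, s)` mod `p` and leaves the carries `τ`. -/
def CarryPath (p a b : ℕ) (σ τ : ℤ × ℤ) (v : ZMod p) : Prop :=
  ∃ k n x s : ℕ, x < p ^ k ∧ s < p ^ k ∧ (a : ℤ) * n + σ.1 = (p : ℤ) ^ k * τ.1 + x ∧
    (b : ℤ) * n + σ.2 = (p : ℤ) ^ k * τ.2 + s ∧ (x.choose s : ZMod p) = v

variable {σ τ ρ : ℤ × ℤ} {v w : ZMod p}

lemma CarryPath.refl (σ : ℤ × ℤ) : CarryPath p a b σ σ 1 :=
  ⟨0, 0, 0, 0, by simp⟩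

lemma CarryPath.of_add_mul (N : ℕ) (h : CarryPath p a b (σ.1 + a * N, σ.2 + b * N) τ v) :
    CarryPath p a b σ τ v := by
  obtain ⟨k, n, x, s, hx, hs, hxn, hsn, hv⟩ := h
  refine ⟨k, n + N, x, s, hx, hs, ?_, ?_, hv⟩
  · rw [← hxn]
    push_cast
    ring
  · rw [← hsn]
    push_cast
    ring

variable [hp : Fact p.Prime]

lemma CarryPath.trans (h : CarryPath p a b σ τ v) (h' : CarryPath p a b τ ρ w) :
    CarryPath p a b σ ρ (v * w) := by
  obtain ⟨k, n, x, s, hx, hs, hxn, hsn, rfl⟩ := h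
  obtain ⟨k', n', x', s', hx', hs', hxn', hsn', rfl⟩ := h'
  have hlt {x x' : ℕ} (hx : x < p ^ k) (hx' : x' < p ^ k') : x + p ^ k * x' < p ^ (k + k') := by
    calc x + p ^ k * x' < p ^ k * (x' + 1) := by rw [mul_add_one]; omega
      _ ≤ p ^ (k + k') := by rw [pow_add]; exact Nat.mul_le_mul_left _ hx'
  refine ⟨k + k', n + p ^ k * n', x + p ^ k * x', s + p ^ k * s', hlt hx hx', hlt hs hs', ?_, ?_,
    cast_choose_add_pow_mul hx hs x' s'⟩
  · push_cast
    linear_combination hxn + (p : ℤ) ^ k * hxn'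
  · push_cast
    linear_combination hsn + (p : ℤ) ^ k * hsn'

lemma carryPath_zero_iff :
    CarryPath p a b σ 0 v ↔ ∃ n x s : ℕ, (a : ℤ) * n + σ.1 = x ∧ (b : ℤ) * n + σ.2 = s ∧
      (x.choose s : ZMod p) = v := by
  constructor
  · rintro ⟨k, n, x, s, -, -, hx, hs, hv⟩
    exact ⟨n, x, s, by simpa using hx, by simpa using hs, hv⟩
  · rintro ⟨n, x, s, hx, hs, hv⟩
    have hlt : x + s < p ^ (x + s) := Nat.lt_pow_self hp.out.one_lt
    exact ⟨x + s, n, x, s, by omega, by omega, by simpa using hx, by simpa using hs, hv⟩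

/-- The values `C(a n, b n)` mod `p`, in the guise of carry paths from zero to zero, which makes
them a submonoid. -/
def loopValues (p a b : ℕ) [Fact p.Prime] : Submonoid (ZMod p) where
  carrier := {v | CarryPath p a b 0 0 v}
  one_mem' := .refl 0
  mul_mem' := .trans

lemma mem_loopValues_iff : v ∈ loopValues p a b ↔ ∃ n, ((a * n).choose (b * n) : ZMod p) = v := by
  refine carryPath_zero_iff.trans ⟨?_, ?_⟩
  · rintro ⟨n, x, s, hx, hs, hv⟩
    obtain rfl : a * n = x := by exact_mod_cast (add_zero _).symm.trans hx
    obtain rfl : b * n = s := by exact_mod_cast (add_zero _).symm.trans hs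
    exact ⟨n, hv⟩
  · rintro ⟨n, hv⟩
    exact ⟨n, a * n, b * n, by simp, by simp, hv⟩

lemma loopValues_sub (hba : b ≤ a) : loopValues p a (a - b) = loopValues p a b := by
  ext v
  simp only [mem_loopValues_iff, Nat.sub_mul, Nat.choose_symm (Nat.mul_le_mul_right _ hba)]

/- With `p ^ k = a q + 1`, choosing `n = (α % a + 1) q - α / a` makes all `k` digits of the first
entry equal to `p - 1`, so no binomial coefficient below them vanishes. -/
lemma exists_carryPath_to_zero (ha : 0 < a) (hap : a < p) (hba : b ≤ a) {α β : ℕ} (hβα : β ≤ α) :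
    ∃ v ≠ 0, CarryPath p a b (α, β) 0 v := by
  obtain ⟨k, q, hlt, hpow⟩ := exists_lt_pow_eq_mul_add_one
    ((hp.out.coprime_iff_not_dvd.2 (Nat.not_dvd_of_pos_of_lt ha hap))) α
  set u := α % a
  set P := p ^ k
  have hle : α / a ≤ (u + 1) * q := by
    have : a * (α / a) ≤ a * q := (Nat.mul_div_le α a).trans (by omega)
    exact (Nat.le_of_mul_le_mul_left this ha).trans (Nat.le_mul_of_pos_left q u.succ_pos)
  set n := (u + 1) * q - α / a
  have hn : a * n + α = P * u + (P - 1) := by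
    have hα : a * (α / a) + u = α := Nat.div_add_mod α a
    have hq : a * ((u + 1) * q) + (u + 1) = P * (u + 1) := by rw [hpow]; ring
    rw [Nat.mul_sub, mul_add_one P] at *
    have := Nat.mul_le_mul_left a hle
    omega
  set t := (b * n + β) / P
  have ht : t ≤ u := by
    rw [← Nat.lt_succ_iff, Nat.div_lt_iff_lt_mul (by omega), Nat.succ_mul, mul_comm u]
    have := Nat.mul_le_mul_right n hba
    omega
  have hs := Nat.mod_lt (b * n + β) (y := P) (by omega)
  refine ⟨(P - 1).choose ((b * n + β) % P) * u.choose t, mul_ne_zero ?_ ?_,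
    .trans (τ := (u, t)) ⟨k, n, P - 1, (b * n + β) % P, by omega, hs, ?_, ?_, rfl⟩
      (carryPath_zero_iff.2 ⟨0, u, t, by simp, by simp, rfl⟩)⟩
  · rw [cast_choose_pow_sub_one (k := k) (by omega) (by omega)]
    exact pow_ne_zero _ (neg_ne_zero.2 one_ne_zero)
  · exact cast_choose_ne_zero_of_lt ((Nat.mod_lt α ha).trans hap) ht
  · push_cast
    exact_mod_cast hn
  · push_cast
    exact_mod_cast (Nat.div_add_mod (b * n + β) P).symm

lemma exists_carryPath_to_zero_of_int (hb : 0 < b) (hba : b < a) (hap : a < p) (α β : ℤ) :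
    ∃ v ≠ 0, CarryPath p a b (α, β) 0 v := by
  set N := α.natAbs + β.natAbs
  have hbN : (N : ℤ) ≤ b * N := le_mul_of_one_le_left (by omega) (by omega)
  have habN : (b + 1 : ℤ) * N ≤ a * N := mul_le_mul_of_nonneg_right (by omega) (by omega)
  rw [add_one_mul] at habN
  obtain ⟨v, hv, hpath⟩ := exists_carryPath_to_zero (by omega) hap hba.le
    (α := (α + a * N).toNat) (β := (β + b * N).toNat) (by omega)
  rw [Int.toNat_of_nonneg (by omega), Int.toNat_of_nonneg (by omega)] at hpath
  exact ⟨v, hv, hpath.of_add_mul N⟩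

end CarryPaths

section Ratios

variable {p a b : ℕ} [hp : Fact p.Prime] {v w : ZMod p}

lemma carryPath_of_digit {n x s : ℕ} {α β A B : ℤ} (hx : x < p) (hs : s < p)
    (hα : (a : ℤ) * n + α = p * A + x) (hβ : (b : ℤ) * n + β = p * B + s) :
    CarryPath p a b (α, β) (A, B) (x.choose s) :=
  ⟨1, n, x, s, by rwa [pow_one], by rwa [pow_one], by rwa [pow_one], by rwa [pow_one], rfl⟩

lemma add_eq_mul_div_add_of_cast_eq {c α x : ℕ} {j : ZMod p} (hx : x < p) (h : c * j + α = x) :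
    c * j.val + α = p * ((c * j.val + α) / p) + x := by
  have hcast : ((c * j.val + α : ℕ) : ZMod p) = x := by simpa using h
  have hmod : (c * j.val + α) % p = x :=
    Nat.mod_eq_of_modEq ((ZMod.natCast_eq_natCast_iff _ _ _).1 hcast) hx
  conv_rhs => rw [← hmod]
  exact (Nat.div_add_mod _ p).symm

-- Both paths read the digit `j`, which leaves them with the same carries.
lemma div_mul_choose_div_choose_mem_loopValues (ha : 0 < a) (hap : a < p) (hba : b ≤ a)
    {α β i k : ℕ} (hβα : β ≤ α) (hv : CarryPath p a b 0 (α, β) v)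
    (hw : CarryPath p a b 0 (α + i, β + k) w) {j : ZMod p} {x s : ℕ} (hx : a * j + α = x)
    (hs : b * j + β = s) (hxi : x + i < p) (hsk : s + k < p) :
    w / v * ((x + i).choose (s + k) / x.choose s) ∈ loopValues p a b := by
  set A := (a * j.val + α) / p
  set B := (b * j.val + β) / p
  have hA : a * j.val + α = p * A + x := add_eq_mul_div_add_of_cast_eq (by omega) hx
  have hB : b * j.val + β = p * B + s := add_eq_mul_div_add_of_cast_eq (by omega) hs
  have hBA : B ≤ A := Nat.div_le_div_right (add_le_add (Nat.mul_le_mul_right _ hba) hβα)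
  obtain ⟨u, hu, hend⟩ := exists_carryPath_to_zero (p := p) ha hap hba hBA
  have hfirst : v * (x.choose s * u) ∈ loopValues p a b := hv.trans <| .trans
    (carryPath_of_digit (by omega) (by omega) (by exact_mod_cast hA) (by exact_mod_cast hB)) hend
  have hsecond : w * ((x + i).choose (s + k) * u) ∈ loopValues p a b := hw.trans <| .trans
    (carryPath_of_digit (n := j.val) hxi hsk (by
      have := (Nat.cast_inj (R := ℤ)).2 hA
      push_cast at this ⊢
      linear_combination this) (by
      have := (Nat.cast_inj (R := ℤ)).2 hB
      push_cast at this ⊢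
      linear_combination this)) hend
  have hratio := div_mem_of_mem_submonoid hsecond hfirst
  rwa [mul_div_mul_comm, mul_div_mul_right _ _ hu] at hratio

end Ratios

section Reach

variable {p a b : ℕ} [hp : Fact p.Prime]

-- The addend is `n = (u + i) q`, where `1 / a = -q` in base `p ^ k`.
lemma carryPath_of_pow_eq {k q i u u' t t' W x s : ℕ} (hpow : p ^ k = a * q + 1)
    (hu : u' + 1 = u + i) (hW : a * t' + W = b * (u + i)) (hx : x + i = p ^ k)
    (hi : 0 < i) (hs : s + t' = W * q + t) (hsP : s < p ^ k) :
    CarryPath p a b (u, t) (u', t') (x.choose s) := by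
  refine ⟨k, (u + i) * q, x, s, by omega, hsP, ?_, ?_, rfl⟩
  · zify at hpow hu hx
    push_cast
    linear_combination -hx - (p : ℤ) ^ k * hu - (u + i) * hpow
  · zify at hpow hs hW
    push_cast
    linear_combination -q * hW - hs - t' * hpow

lemma exists_carryPath_succ (hap : a < p) (hba : b < a) {u : ℕ} (hu : ¬ a ∣ b * (u + 2)) :
    ∃ v ≠ 0, CarryPath p a b (u, (b * (u + 1) / a : ℕ)) ((u + 1 : ℕ), (b * (u + 2) / a : ℕ)) v := by
  obtain ⟨k, q, hlt, hpow⟩ := exists_lt_pow_eq_mul_add_one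
    (hp.out.coprime_iff_not_dvd.2 (Nat.not_dvd_of_pos_of_lt (by omega) hap)) a
  set t := b * (u + 1) / a
  set t' := b * (u + 2) / a
  set W := b * (u + 2) % a
  have hk : k ≠ 0 := by
    rintro rfl
    rw [pow_zero] at hlt
    omega
  have hWa : W < a := Nat.mod_lt _ (by omega)
  have hW0 : 0 < W := Nat.pos_of_ne_zero fun h => hu (Nat.dvd_of_mod_eq_zero h)
  have htt' : t' = t ∨ t' = t + 1 := by
    have := Nat.add_div (a := b * (u + 1)) (b := b) (c := a) (by omega)
    rw [Nat.div_eq_of_lt hba] at this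
    change t' = t + 0 + _ at this
    split_ifs at this <;> omega
  have hqW : q ≤ W * q := Nat.le_mul_of_pos_left q hW0
  have hqa : (W + 1) * q ≤ a * q := Nat.mul_le_mul_right q hWa
  rw [add_one_mul] at hqa
  have hq : 0 < q := Nat.pos_of_ne_zero (by rintro rfl; omega)
  obtain ⟨s, hs⟩ : ∃ s, s + t' = W * q + t := ⟨W * q + t - t', by omega⟩
  refine ⟨_, ?_, carryPath_of_pow_eq hpow (x := p ^ k - 2) (s := s) rfl (Nat.div_add_mod ..)
    (by omega) two_pos hs (by omega)⟩
  rw [cast_choose_pow_sub_two (k := k) (by omega) hk (by omega)]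
  refine mul_ne_zero (pow_ne_zero _ (neg_ne_zero.2 one_ne_zero)) fun hs0 => ?_
  have haq : (a * q + 1 : ZMod p) = 0 := by
    have := congrArg (Nat.cast (R := ZMod p)) hpow
    simpa [hk] using this.symm
  have hscast := congrArg (Nat.cast (R := ZMod p)) hs
  push_cast at hscast
  rcases htt' with htt' | htt' <;> rw [htt'] at hscast
  · refine natCast_zmod_ne_zero_of_lt (p := p) (n := a - W) (by omega) (by omega) ?_
    rw [Nat.cast_sub hWa.le]
    linear_combination a * hs0 - a * hscast - W * haq
  · refine natCast_zmod_ne_zero_of_lt hW0 (hWa.trans hap) ?_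
    push_cast at hscast
    linear_combination -a * hs0 + a * hscast + W * haq

lemma exists_carryPath_of_not_dvd (hap : a < p) (hba : b < a) {u : ℕ}
    (hu : ∀ j, 0 < j → j ≤ u + 1 → ¬ a ∣ b * j) :
    ∃ v ≠ 0, CarryPath p a b 0 (u, (b * (u + 1) / a : ℕ)) v := by
  induction u with
  | zero => exact ⟨1, one_ne_zero, by simpa [Nat.div_eq_of_lt hba] using! CarryPath.refl 0⟩
  | succ u ih =>
    obtain ⟨v, hv, hpath⟩ := ih fun j hj hju => hu j hj (hju.trans (Nat.le_succ _))
    obtain ⟨w, hw, hstep⟩ := exists_carryPath_succ hap hba (hu (u + 2) (by omega) le_rfl)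
    exact ⟨v * w, mul_ne_zero hv hw, hpath.trans hstep⟩

-- The digits `x - 1` and `x - t` read from the two carries have binomials of ratio `x / t`.
lemma div_mul_div_mem_loopValues (ha : 0 < a) (hap : a < p) (hba : b ≤ a) {u T W : ℕ} (hTu : T ≤ u)
    (hTW : a * T + W = b * (u + 1)) {v w : ZMod p} (hv : CarryPath p a b 0 (u, T) v)
    (hw : CarryPath p a b 0 (u + 1, T) w) {x t : ZMod p} (ht : t ≠ 0)
    (hline : a * t = (a - b : ℕ) * x + W) (hle : t.val ≤ x.val) :
    w / v * (x / t) ∈ loopValues p a b := by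
  have ha0 : (a : ZMod p) ≠ 0 := natCast_zmod_ne_zero_of_lt ha hap
  have ht0 : 0 < t.val := Nat.pos_of_ne_zero ((ZMod.val_ne_zero t).2 ht)
  have hxp := x.val_lt
  obtain ⟨y, hy⟩ := Nat.exists_eq_add_of_lt (ht0.trans_le hle)
  rw [zero_add] at hy
  obtain ⟨s, hs⟩ := Nat.exists_eq_add_of_le hle
  have hxy : (x : ZMod p) = (y + 1 : ℕ) := by rw [← hy, ZMod.natCast_rightInverse]
  have hty : (t : ZMod p) = (y + 1 - s : ℕ) := by
    rw [← hy, hs, Nat.add_sub_cancel_right, ZMod.natCast_rightInverse]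
  have hratio := cast_choose_succ_div_choose (p := p) (x := y) (s := s) (by omega) (by omega)
  rw [hxy, hty, ← hratio]
  refine div_mul_choose_div_choose_mem_loopValues ha hap hba (k := 0) hTu hv (by simpa using hw)
    (j := (y - u) / a) ?_ ?_ (by omega) (by omega)
  · rw [mul_div_cancel₀ _ ha0, sub_add_cancel]
  · refine mul_left_cancel₀ ha0 ?_
    have hcast := congrArg (Nat.cast (R := ZMod p)) hTW
    have : (b * (y - u) / a * a : ZMod p) = b * (y - u) := div_mul_cancel₀ _ ha0
    rw [hxy, hty, Nat.cast_sub hba, Nat.cast_sub (by omega)] at hline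
    push_cast at hcast hline
    linear_combination this + hcast + hline

lemma div_mem_loopValues (hap : a < p) (hb : 0 < b) {u : ℕ} (hWb : b * (u + 1) % a + b < a)
    (hu : ∀ j, 0 < j → j ≤ u + 2 → ¬ a ∣ b * j) {x t : ZMod p} (ht : t ≠ 0)
    (hline : a * t = (a - b : ℕ) * x + (b * (u + 1) % a : ℕ)) (hle : t.val ≤ x.val) :
    x / t ∈ loopValues p a b := by
  set W := b * (u + 1) % a
  set T := b * (u + 1) / a
  have hTW : a * T + W = b * (u + 1) := Nat.div_add_mod ..
  have hW0 : 0 < W := Nat.pos_of_ne_zero fun h => hu (u + 1) (by omega) (by omega)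
    (Nat.dvd_of_mod_eq_zero h)
  have hT : b * (u + 2) / a = T := by
    rw [show b * (u + 2) = b * (u + 1) + b from rfl, ← hTW, add_assoc,
      Nat.mul_add_div (by omega), Nat.div_eq_of_lt hWb, add_zero]
  have hTu : T ≤ u :=
    Nat.le_of_lt_succ (Nat.div_lt_of_lt_mul (Nat.mul_lt_mul_of_pos_right (by omega) u.succ_pos))
  obtain ⟨v, hv, hpv⟩ := exists_carryPath_of_not_dvd hap (by omega)
    fun j hj hju => hu j hj (hju.trans (Nat.le_succ _))
  obtain ⟨w, hw, hpw⟩ := exists_carryPath_of_not_dvd hap (by omega) hu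
  rw [hT] at hpw
  have hratio {x t : ZMod p} := div_mul_div_mem_loopValues (x := x) (t := t) (by omega) hap
    (by omega) hTu hTW hpv (by exact_mod_cast hpw)
  have hconst : w / v ∈ loopValues p a b := by
    have hb0 : (b : ZMod p) ≠ 0 := natCast_zmod_ne_zero_of_lt hb (by omega)
    have hx0 : (W / b : ZMod p) ≠ 0 :=
      div_ne_zero (natCast_zmod_ne_zero_of_lt hW0 (by omega)) hb0
    have := hratio (x := W / b) hx0 (by
      rw [Nat.cast_sub (by omega), sub_mul, mul_div_cancel₀ _ hb0, sub_add_cancel]) le_rfl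
    rwa [div_self hx0, mul_one] at this
  have := div_mem_of_mem_submonoid (hratio ht hline hle) hconst
  rwa [mul_div_cancel_left₀ _ (div_ne_zero hw hv)] at this

end Reach

section Loops

variable {p a b : ℕ} [hp : Fact p.Prime]

lemma zero_mem_loopValues (hb : 0 < b) (hba : b < a) (hap : a < p) :
    (0 : ZMod p) ∈ loopValues p a b := by
  set n := p ^ 2 / a + 1
  obtain ⟨x, hx, hxa⟩ : ∃ x, a * n = x + p ^ 2 * 1 ∧ x ≤ a := by
    have hdiv : a * (p ^ 2 / a) + p ^ 2 % a = p ^ 2 := Nat.div_add_mod ..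
    have hmod : p ^ 2 % a < a := Nat.mod_lt _ (by omega)
    exact ⟨a - p ^ 2 % a, by rw [mul_add_one a]; omega, by omega⟩
  have hpp : p ≤ p ^ 2 := Nat.le_self_pow two_ne_zero p
  have hpn : p < n := by
    rw [Nat.lt_add_one_iff, Nat.le_div_iff_mul_le (by omega), sq]
    exact Nat.mul_le_mul_left p hap.le
  have hbn : b * n < p ^ 2 := by
    have : (b + 1) * n ≤ a * n := Nat.mul_le_mul_right n hba
    rw [add_one_mul] at this
    omega
  have hnbn : n ≤ b * n := Nat.le_mul_of_pos_left n hb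
  refine mem_loopValues_iff.2 ⟨n, ?_⟩
  have hblock := cast_choose_add_pow_mul (p := p) (k := 2) (x := x) (s := b * n)
    (by omega) hbn 1 0
  rw [mul_zero, add_zero, ← hx] at hblock
  rw [hblock, Nat.choose_eq_zero_of_lt (by omega), Nat.cast_zero, zero_mul]

lemma mem_loopValues_of_two_mul_lt (hp11 : 11 ≤ p) (hb : 0 < b) (hba : 2 * b < a) (hap : a + 1 < p)
    {v : ZMod p} (hv : v ≠ 0) : v ∈ loopValues p a b := by
  obtain ⟨d, c, b, hd, hcop, rfl, rfl⟩ := Nat.exists_coprime' (m := a) (n := b)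
    (Nat.gcd_pos_of_pos_right a hb)
  have hb0 : 0 < b := Nat.pos_of_mul_pos_right hb
  have hbc : 2 * b < c := by rwa [← mul_assoc, Nat.mul_lt_mul_right hd] at hba
  have hcd : c ≤ c * d := Nat.le_mul_of_pos_right c hd
  refine mem_of_forall_div_mem (c := c) (g := c - b) hp11 (by omega) (by omega) (by omega)
    (fun w hw hwg x t ht hline hle => ?_) hv
  obtain ⟨m, hmc, hm⟩ := Nat.exists_mul_mod_eq_of_coprime w hcop.symm (by omega)
  rw [Nat.mod_eq_of_lt (show w < c by omega)] at hm
  obtain ⟨u, rfl⟩ : ∃ u, m = u + 1 :=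
    Nat.exists_eq_succ_of_ne_zero (by rintro rfl; rw [mul_zero, Nat.zero_mod] at hm; omega)
  have huc : u + 2 ≠ c := by
    rintro rfl
    have := Nat.mul_mod_left b (u + 2)
    rw [show b * (u + 2) = b * (u + 1) + b from rfl] at this
    rw [← Nat.mod_add_mod, hm, Nat.mod_eq_of_lt (by omega)] at this
    omega
  have hmod : b * d * (u + 1) % (c * d) = w * d := by
    rw [mul_right_comm, Nat.mul_mod_mul_right, hm]
  refine div_mem_loopValues (u := u) (by omega) hb ?_ (fun j hj hju hdvd => ?_) ht ?_ hle
  · rw [hmod, ← add_mul]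
    exact Nat.mul_lt_mul_of_pos_right (by omega) hd
  · rw [mul_right_comm, Nat.mul_dvd_mul_iff_right hd] at hdvd
    have := Nat.le_of_dvd hj (hcop.dvd_of_dvd_mul_left hdvd)
    omega
  · rw [hmod, ← Nat.sub_mul]
    push_cast
    linear_combination (d : ZMod p) * hline

lemma exists_carryPath_two_one (hb : 0 < b) (hbp : 2 * b < p) :
    ∃ v ≠ 0, CarryPath p (2 * b) b 0 (2, 1) v := by
  obtain ⟨k, q, hlt, hpow⟩ := exists_lt_pow_eq_mul_add_one
    (hp.out.coprime_iff_not_dvd.2 (Nat.not_dvd_of_pos_of_lt (by omega) hbp)) 2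
  have hk : k ≠ 0 := by
    rintro rfl
    rw [pow_zero] at hlt
    omega
  rw [mul_assoc] at hpow
  obtain ⟨s, hs⟩ : ∃ s, b * q = s + 1 := Nat.exists_eq_succ_of_ne_zero (by omega)
  have hline : 2 * b * 1 + b = b * (0 + 3) := by ring
  refine ⟨(2 * s).choose s, fun h0 => ?_, carryPath_of_pow_eq (k := k) (q := q) (i := 3) (u := 0)
    (t := 0) (t' := 1) (u' := 2) (by rw [hpow, mul_assoc]) rfl hline (by omega) (by omega)
    (by omega) (by omega)⟩
  have hcentral := congrArg (Nat.cast (R := ZMod p)) (Nat.succ_mul_centralBinom_succ s)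
  rw [Nat.cast_mul, Nat.cast_mul, Nat.centralBinom_eq_two_mul_choose s, h0, mul_zero,
    Nat.centralBinom_eq_two_mul_choose,
    cast_choose_pow_sub_one (k := k) (by omega) (by omega)] at hcentral
  have hs0 : ((s + 1 : ℕ) : ZMod p) = 0 :=
    (mul_eq_zero.1 hcentral).resolve_right (pow_ne_zero _ (neg_ne_zero.2 one_ne_zero))
  have hone := congrArg (Nat.cast (R := ZMod p)) hpow
  rw [hs, Nat.cast_add, Nat.cast_mul, hs0, Nat.cast_pow, CharP.cast_eq_zero, zero_pow hk] at hone
  simp at hone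

lemma odd_div_mem_loopValues (hb : 0 < b) (hbp : 2 * b < p) {m : ℕ} (hm : 2 * m + 2 < p) :
    ((2 * m + 1) / (m + 1) : ZMod p) ∈ loopValues p (2 * b) b := by
  obtain ⟨v, hv, hpath⟩ := exists_carryPath_two_one hb hbp
  have hb0 : (b : ZMod p) ≠ 0 := natCast_zmod_ne_zero_of_lt hb (by omega)
  have h2 : (2 : ZMod p) ≠ 0 := natCast_zmod_ne_zero_of_lt (n := 2) (by omega) (by omega)
  have hratio {s : ℕ} (hs : 2 * s + 2 < p) :
      2 * v * ((2 * s + 1) / (s + 1)) ∈ loopValues p (2 * b) b := by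
    have hmem := div_mul_choose_div_choose_mem_loopValues (a := 2 * b) (b := b) (α := 0) (β := 0)
      (i := 2) (k := 1) (j := s / b) (x := 2 * s) (s := s) (by omega) hbp (by omega) le_rfl
      (.refl 0) (by exact_mod_cast hpath) (by push_cast; field_simp; ring) (by field_simp; simp)
      hs (by omega)
    rwa [div_one, cast_choose_two_mul_add_two_div hs, ← mul_assoc, mul_comm v] at hmem
  have := div_mem_of_mem_submonoid (hratio hm) (hratio (s := 0) (by omega))
  simpa [mul_div_cancel_left₀ _ (mul_ne_zero h2 hv)] using this

lemma mem_loopValues_two_mul (hp11 : 11 ≤ p) (hb : 0 < b) (hbp : 2 * b < p) {v : ZMod p}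
    (hv : v ≠ 0) : v ∈ loopValues p (2 * b) b :=
  mem_of_forall_odd_div_mem hp11 (fun _ => odd_div_mem_loopValues hb hbp) hv

lemma choose_mem_loopValues (n : ℕ) : ((a * n).choose (b * n) : ZMod p) ∈ loopValues p a b :=
  mem_loopValues_iff.2 ⟨n, rfl⟩

lemma mem_loopValues_of_two_mul_le_of_lt (hp11 : p < 11) (hb : 0 < b) (hba : 2 * b ≤ a)
    (hap : a + 1 < p) {v : ZMod p} (hv : v ≠ 0) : v ∈ loopValues p a b := by
  have of_pow {g : ℕ} (hg : (g : ZMod p) ∈ loopValues p a b)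
      (hpow : ∀ i < p, 0 < i → ∃ k < p, g ^ k % p = i) : v ∈ loopValues p a b := by
    obtain ⟨k, -, hk⟩ := hpow v.val v.val_lt (Nat.pos_of_ne_zero ((ZMod.val_ne_zero v).2 hv))
    rw [← ZMod.natCast_rightInverse v, ← hk, ZMod.natCast_mod, Nat.cast_pow]
    exact pow_mem hg k
  have of_choose (n : ℕ) := of_pow (choose_mem_loopValues n)
  have of_choose_mul_choose (n n' : ℕ) := of_pow (g := (a * n).choose (b * n) *
    (a * n').choose (b * n')) (by
      rw [Nat.cast_mul]
      exact mul_mem (choose_mem_loopValues n) (choose_mem_loopValues n'))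
  have hprime := hp.out
  obtain rfl | rfl : p = 5 ∨ p = 7 := by
    interval_cases p <;> first | omega | (norm_num at hprime)
  · obtain ⟨rfl, rfl⟩ | ⟨rfl, rfl⟩ : a = 2 ∧ b = 1 ∨ a = 3 ∧ b = 1 := by omega
    · exact of_choose 1 (by decide)
    · exact of_choose 1 (by decide)
  · obtain ⟨rfl, rfl⟩ | ⟨rfl, rfl⟩ | ⟨rfl, rfl⟩ | ⟨rfl, rfl⟩ | ⟨rfl, rfl⟩ | ⟨rfl, rfl⟩ :
        a = 2 ∧ b = 1 ∨ a = 3 ∧ b = 1 ∨ a = 4 ∧ b = 1 ∨ a = 4 ∧ b = 2 ∨ a = 5 ∧ b = 1 ∨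
          a = 5 ∧ b = 2 := by
      omega
    · exact of_choose_mul_choose 1 2 (by decide)
    · exact of_choose 1 (by decide)
    · exact of_choose 3 (by decide)
    · exact of_choose_mul_choose 1 4 (by decide)
    · exact of_choose 1 (by decide)
    · exact of_choose 1 (by decide)

lemma mem_loopValues_of_two_mul_le (hb : 0 < b) (hba : 2 * b ≤ a) (hap : a + 1 < p)
    {v : ZMod p} (hv : v ≠ 0) : v ∈ loopValues p a b := by
  rcases lt_or_ge p 11 with hp11 | hp11
  · exact mem_loopValues_of_two_mul_le_of_lt hp11 hb hba hap hv
  · rcases hba.eq_or_lt with rfl | hba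
    · exact mem_loopValues_two_mul hp11 hb (by omega) hv
    · exact mem_loopValues_of_two_mul_lt hp11 hb hba hap hv

lemma loopValues_eq_top (hb : 0 < b) (hba : b < a) (hap : a + 1 < p) : loopValues p a b = ⊤ := by
  refine eq_top_iff.2 fun v _ => ?_
  rcases eq_or_ne v 0 with rfl | hv
  · exact zero_mem_loopValues hb hba (by omega)
  · rcases le_total (2 * b) a with h | h
    · exact mem_loopValues_of_two_mul_le hb h hap hv
    · rw [← loopValues_sub hba.le]
      exact mem_loopValues_of_two_mul_le (by omega) (by omega) hap hv

lemma carryPath_to_zero (hb : 0 < b) (hba : b < a) (hap : a + 1 < p) (α β : ℤ) (r : ZMod p) :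
    CarryPath p a b (α, β) 0 r := by
  obtain ⟨v, hv, hpath⟩ := exists_carryPath_to_zero_of_int hb hba (by omega : a < p) α β
  have hloop : v⁻¹ * r ∈ loopValues p a b := loopValues_eq_top hb hba hap ▸ Submonoid.mem_top _
  simpa [mul_inv_cancel_left₀ hv] using hpath.trans hloop

end Loops

theorem stmt_14_general (a b : ℕ) (hb : 0 < b) (hab : b < a) (α β : ℤ) (p : ℕ) (hp : p.Prime)
    (hap : a + 1 < p) (r N : ℕ) :
    ∃ n : ℕ, N ≤ n ∧ 0 < n ∧ 0 ≤ (a : ℤ) * n + α ∧ 0 ≤ (b : ℤ) * n + β ∧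
      Nat.choose ((a : ℤ) * n + α).toNat ((b : ℤ) * n + β).toNat ≡ r [MOD p] := by
  have : Fact p.Prime := ⟨hp⟩
  obtain ⟨n, x, s, hx, hs, hr⟩ := carryPath_zero_iff.1
    (carryPath_to_zero hb hab hap (α + a * (N + 1 : ℕ)) (β + b * (N + 1 : ℕ)) r)
  have hxn : (a : ℤ) * (n + (N + 1) : ℕ) + α = x := by
    rw [← hx]
    push_cast
    ring
  have hsn : (b : ℤ) * (n + (N + 1) : ℕ) + β = s := by
    rw [← hs]
    push_cast
    ring
  refine ⟨n + (N + 1), by omega, by omega, by omega, by omega, ?_⟩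
  rwa [hxn, hsn, Int.toNat_natCast, Int.toNat_natCast, ← ZMod.natCast_eq_natCast_iff]

/-- Theorem 4.2(ii): let `a > b` be positive integers, `α, β` integers,
`d = gcd(a,b)`, `c = a/d`, `p` a prime with `p > a + 2b`, and `e = gcd(p-1, a)`.
Suppose `e ≥ c` and `ν₂(a) > ν₂(p-1)`.  Then for every `r` with `0 ≤ r ≤ p-1` that
is not congruent modulo `p` to any number `(2μ-1)e + p + α - 2 + r'` with integers
`0 ≤ r' ≤ e - c` and `⌈(e+2-p-α)/(2e)⌉ ≤ μ ≤ ⌈(c+1-α)/(2e)⌉`, there are infinitely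
many positive integers `n` (with `a*n+α ≥ 0` and `b*n+β ≥ 0`) such that
`C(a*n+α, b*n+β) ≡ r (mod p)`. -/
theorem stmt_14 (a b : ℕ) (hb : 0 < b) (hab : b < a) (α β : ℤ)
    (d c : ℕ) (hd : d = Nat.gcd a b) (hc : c = a / d)
    (p : ℕ) (hp : p.Prime) (hpab : a + 2 * b < p)
    (e : ℕ) (he : e = Nat.gcd (p - 1) a)
    (hec : c ≤ e) (hval : padicValNat 2 (p - 1) < padicValNat 2 a) :
    ∀ r : ℕ, r ≤ p - 1 →
      (∀ r' μ : ℤ, 0 ≤ r' → r' ≤ (e : ℤ) - (c : ℤ) →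
        ⌈((e : ℚ) + 2 - (p : ℚ) - (α : ℚ)) / (2 * (e : ℚ))⌉ ≤ μ →
        μ ≤ ⌈((c : ℚ) + 1 - (α : ℚ)) / (2 * (e : ℚ))⌉ →
        ¬ ((r : ℤ) ≡ (2 * μ - 1) * (e : ℤ) + (p : ℤ) + α - 2 + r' [ZMOD (p : ℤ)])) →
      ∀ N : ℕ, ∃ n : ℕ, N ≤ n ∧ 0 < n ∧
        0 ≤ (a : ℤ) * n + α ∧ 0 ≤ (b : ℤ) * n + β ∧
        Nat.choose ((a : ℤ) * n + α).toNat ((b : ℤ) * n + β).toNat ≡ r [MOD p] :=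
  fun r _ _ => stmt_14_general a b hb hab α β p hp (by omega) r
end

section
/- Let p be an odd prime and let a > b be positive integers with p ∤ a and p ∤ b. Let s be the integer with 1 ≤ s ≤ p−1 and sb ≡ 1 (mod p); write sa = pQ + r with 1 ≤ r ≤ p−1 and sb = pQ′ + 1. Let t be an integer with st ≡ −1 (mod p) and write st = kp − 1. Let n be a positive integer such that pn + t is prime, and such that 0 ≤ rn + ak − Qt < pn + t and 0 ≤ n + bk − Q′t < pn + t. Set K = pn + ns + t + k. Then C(aK, bK) ≡ C(a+Q, b+Q′) · C(rn + ak − Qt, n + bk − Q′t) (mod pn + t). -/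
/-!
Let `q = p * n + t`, so that `K = q + n * s + k`. Since `s * a = p * Q + r`,
`a * K = a * q + (s * a) * n + a * k = (a + Q) * q + (r * n + a * k - Q * t)`,
and likewise for `b * K`. The range conditions make the last bracket the lowest base-`q` digit, so
the congruence is one step of Lucas' theorem.
-/

theorem choose_mul_add_modEq_choose_mul_choose {q : ℕ} (hq : q.Prime) (A B : ℕ) {x y : ℕ}
    (hx : x < q) (hy : y < q) :
    (q * A + x).choose (q * B + y) ≡ A.choose B * x.choose y [MOD q] := by
  have : Fact q.Prime := ⟨hq⟩
  simpa only [Nat.mul_add_mod, Nat.mod_eq_of_lt, Nat.mul_add_div hq.pos, Nat.div_eq_of_lt, hx, hy,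
    Nat.add_zero, mul_comm (x.choose y)] using
    Choose.choose_modEq_choose_mod_mul_choose_div_nat (p := q) (n := q * A + x) (k := q * B + y)

theorem choose_toNat_mul_add_modEq_choose_mul_choose {q : ℤ} (hq : Prime q) (A B : ℕ) {x y : ℤ}
    (hx : 0 ≤ x) (hxq : x < q) (hy : 0 ≤ y) (hyq : y < q) :
    ((q * A + x).toNat.choose (q * B + y).toNat : ℤ) ≡
      A.choose B * x.toNat.choose y.toNat [ZMOD q] := by
  lift q to ℕ using hx.trans hxq.le
  lift x to ℕ using hx
  lift y to ℕ using hy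
  exact_mod_cast choose_mul_add_modEq_choose_mul_choose (Nat.prime_iff_prime_int.mpr hq) A B
    (Int.ofNat_lt.mp hxq) (Int.ofNat_lt.mp hyq)

theorem mul_eq_mul_add_of_mul_eq {R : Type*} [CommRing R] {p s a Q r : R}
    (h : s * a = p * Q + r) (n t k : R) :
    a * (p * n + n * s + t + k) = (p * n + t) * (a + Q) + (r * n + a * k - Q * t) := by
  linear_combination n * h

theorem stmt_15_general {p s r r' t k n K : ℤ} {a b Q Q' : ℕ}
    (hsa : s * a = p * Q + r) (hsb : s * b = p * Q' + r') (hprime : Prime (p * n + t))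
    (hx : 0 ≤ r * n + a * k - Q * t) (hxq : r * n + a * k - Q * t < p * n + t)
    (hy : 0 ≤ r' * n + b * k - Q' * t) (hyq : r' * n + b * k - Q' * t < p * n + t)
    (hK : K = p * n + n * s + t + k) :
    ((a * K).toNat.choose (b * K).toNat : ℤ) ≡
      (a + Q).choose (b + Q') *
        (r * n + a * k - Q * t).toNat.choose (r' * n + b * k - Q' * t).toNat
      [ZMOD (p * n + t)] := by
  rw [hK, mul_eq_mul_add_of_mul_eq hsa, mul_eq_mul_add_of_mul_eq hsb]
  exact_mod_cast choose_toNat_mul_add_modEq_choose_mul_choose hprime (a + Q) (b + Q') hx hxq hy hyq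

/-- The key congruence in Case I of the proof of Theorem 2.1: let `p` be an odd
prime, `a > b > 0` with `p ∤ a`, `p ∤ b`; let `1 ≤ s ≤ p-1` with `s*b ≡ 1 (mod p)`,
write `s*a = p*Q + r` with `1 ≤ r ≤ p-1` and `s*b = p*Q' + 1`; let `t` be an integer
with `s*t ≡ -1 (mod p)`, written as `s*t = k*p - 1`.  If `n` is a positive integer
such that `p*n + t` is prime, `0 ≤ r*n + a*k - Q*t < p*n + t` and
`0 ≤ n + b*k - Q'*t < p*n + t`, then, with `K = p*n + n*s + t + k`,
`C(a*K, b*K) ≡ C(a+Q, b+Q') * C(r*n + a*k - Q*t, n + b*k - Q'*t) (mod p*n + t)`. -/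
theorem stmt_15 (p : ℕ) (hp : p.Prime) (hodd : Odd p)
    (a b : ℕ) (hb : 0 < b) (hab : b < a) (hpa : ¬ p ∣ a) (hpb : ¬ p ∣ b)
    (s : ℕ) (hs1 : 1 ≤ s) (hs2 : s ≤ p - 1) (hsb1 : s * b % p = 1)
    (Q r : ℕ) (hr1 : 1 ≤ r) (hr2 : r ≤ p - 1) (hsa : s * a = p * Q + r)
    (Q' : ℕ) (hsb : s * b = p * Q' + 1)
    (t k : ℤ) (hst : (s : ℤ) * t ≡ -1 [ZMOD (p : ℤ)]) (hstk : (s : ℤ) * t = k * p - 1)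
    (n : ℕ) (hn : 0 < n) (hprime : Prime ((p : ℤ) * n + t))
    (h1 : 0 ≤ (r : ℤ) * n + a * k - Q * t) (h1' : (r : ℤ) * n + a * k - Q * t < (p : ℤ) * n + t)
    (h2 : 0 ≤ (n : ℤ) + b * k - Q' * t) (h2' : (n : ℤ) + b * k - Q' * t < (p : ℤ) * n + t)
    (K : ℤ) (hK : K = (p : ℤ) * n + n * s + t + k) :
    (Nat.choose ((a : ℤ) * K).toNat ((b : ℤ) * K).toNat : ℤ) ≡
      (Nat.choose (a + Q) (b + Q') : ℤ) *
        (Nat.choose ((r : ℤ) * n + a * k - Q * t).toNat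
          ((n : ℤ) + b * k - Q' * t).toNat : ℤ) [ZMOD ((p : ℤ) * n + t)] := by
  simpa only [one_mul] using stmt_15_general (r' := 1) (mod_cast hsa) (mod_cast hsb) hprime h1 h1'
    (by rwa [one_mul]) (by rwa [one_mul]) hK
end
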